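/- Fix 0 < r < 1 and set t = √(1 − r²). Let ν be a Borel probability measure on 𝕋 = ℝ/2πℤ whose absolutely continuous part with respect to Haar measure is a nonzero measure and whose topological support has nonempty interior. Let (θ_k)_{k∈ℕ₀} be i.i.d. random phases with distribution ν (on the product space (𝕋^{ℕ₀}, ν^{⊗ℕ₀})), and set η_k(ω) = θ_0(ω) + θ_1(ω) + ⋯ + θ_k(ω), so that η_k is distributed as the (k+1)-fold convolution ν ∗ ⋯ ∗ ν. Then for almost every ω, the CMV matrix C_ω with Verblunski coefficients α_k(ω) = r e^{iη_k(ω)} has pure point spectrum: the closed linear span of the eigenvectors of C_ω equals all of ℓ²(ℕ₀;ℂ); equivalently, since e₀ is a cyclic vector for C_ω, the orthogonality measure of the corresponding random orthogonal polynomials on the unit circle is almost surely a pure point measure. -/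

import Mathlib

open MeasureTheory Complex

noncomputable section

instance : Fact (0 < 2 * Real.pi) := ⟨by positivity⟩

/-- The torus `𝕋 = ℝ/2πℤ`. -/
abbrev Torus : Type := AddCircle (2 * Real.pi)

/-- `ec a = e^{ia}` for `a ∈ 𝕋`. -/
def ec (a : Torus) : ℂ := (AddCircle.toCircle a : ℂ)

/-- The topological support of a measure. -/
def measSupport (ν : Measure Torus) : Set Torus := {x | ∀ s ∈ nhds x, 0 < ν s}

/-- `ℓ²(ℕ₀;ℂ)`. -/
abbrev Hn : Type := lp (fun _ : ℕ => ℂ) 2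

/-- Canonical orthonormal basis of `ℓ²(ℕ₀;ℂ)`. -/
def en (k : ℕ) : Hn := lp.single 2 k (1 : ℂ)

/-- Matrix entries of the CMV matrix with Verblunski coefficients `α_k = r e^{iη_k}`,
with torus-valued phases `η`. -/
def CentA (r t : ℝ) (η : ℕ → Torus) (k j : ℕ) : ℂ :=
  if k = 0 then
    (if j = 0 then (r:ℂ) * ec (-(η 0))
     else if j = 1 then ((r*t : ℝ) : ℂ) * ec (-(η 1))
     else if j = 2 then ((t^2 : ℝ) : ℂ) else 0)
  else if k = 1 then
    (if j = 0 then ((t : ℝ) : ℂ)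
     else if j = 1 then -((r^2 : ℝ) : ℂ) * ec (η 0 - η 1)
     else if j = 2 then -((r*t : ℝ) : ℂ) * ec (η 0) else 0)
  else if k % 2 = 0 then
    (if j + 1 = k then ((r*t : ℝ) : ℂ) * ec (-(η k))
     else if j = k then -((r^2 : ℝ) : ℂ) * ec (η (k-1) - η k)
     else if j = k + 1 then ((r*t : ℝ) : ℂ) * ec (-(η (k+1)))
     else if j = k + 2 then ((t^2 : ℝ) : ℂ) else 0)
  else
    (if j + 2 = k then ((t^2 : ℝ) : ℂ)
     else if j + 1 = k then -((r*t : ℝ) : ℂ) * ec (η (k-2))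
     else if j = k then -((r^2 : ℝ) : ℂ) * ec (η (k-1) - η k)
     else if j = k + 1 then -((r*t : ℝ) : ℂ) * ec (η (k-1)) else 0)

noncomputable section

abbrev hh : Measure Torus := AddCircle.haarAddCircle

lemma ec_add (a b : Torus) : ec (a + b) = ec a * ec b := by
  simp [ec, AddCircle.toCircle_add]

lemma norm_ec (a : Torus) : ‖ec a‖ = 1 := Circle.norm_coe _

lemma ec_ne (a : Torus) : ec a ≠ 0 := by
  rw [← norm_ne_zero_iff, norm_ec]; norm_num

lemma ec_zero : ec 0 = 1 := by simp [ec]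

lemma ec_mul_conj (a : Torus) : ec a * (starRingEnd ℂ) (ec a) = 1 := by
  rw [Complex.mul_conj, Complex.normSq_eq_norm_sq, norm_ec]; norm_num

lemma conj_ec (a : Torus) : (starRingEnd ℂ) (ec a) = (ec a)⁻¹ :=
  eq_inv_of_mul_eq_one_right (ec_mul_conj a)

lemma ec_neg (a : Torus) : ec (-a) = (ec a)⁻¹ := by
  apply eq_inv_of_mul_eq_one_right
  rw [← ec_add, add_neg_cancel, ec_zero]

lemma ec_neg' (a : Torus) : ec (-a) = (starRingEnd ℂ) (ec a) := by rw [conj_ec, ec_neg]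

lemma ec_sub (a b : Torus) : ec (a - b) = ec a * (ec b)⁻¹ := by
  rw [sub_eq_add_neg, ec_add, ec_neg]

lemma continuous_ec : Continuous ec := by
  unfold ec
  exact continuous_subtype_val.comp AddCircle.continuous_toCircle

lemma fourier_eq_ec (n : ℤ) (x : Torus) : (fourier n x : ℂ) = ec x ^ n := by
  simp [fourier_apply, ec, AddCircle.toCircle_zsmul]

lemma mean_value (F : ℂ → ℂ) (hF : ∀ z, ‖z‖ ≤ 1 → DifferentiableAt ℂ F z) :
    ∫ ζ, F (ec ζ) ∂hh = F 0 := by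
  have h1 := circleAverage_of_differentiable_on_off_countable (f := F) (c := 0) (R := 1)
    Set.countable_empty
    (fun z hz => (hF z (by simpa using hz)).continuousAt.continuousWithinAt)
    (fun z hz => hF z (by
      have : z ∈ Metric.ball (0:ℂ) |1| := hz.1
      simp at this; exact this.le))
  rw [← h1, AddCircle.integral_haarAddCircle, Real.circleAverage_def,
    ← AddCircle.intervalIntegral_preimage (2 * Real.pi) 0, zero_add]
  congr 1
  apply intervalIntegral.integral_congr
  intro x hx
  simp [ec, AddCircle.toCircle_apply_mk, circleMap]

/-- Szegő pair. -/
def szp (r t : ℝ) (η : ℕ → Torus) : ℕ → Polynomial ℂ × Polynomial ℂ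
  | 0 => (1, 1)
  | n + 1 =>
    (Polynomial.C ((t : ℂ)⁻¹) * (Polynomial.X * (szp r t η n).1
        - Polynomial.C ((r : ℂ) * ec (-(η n))) * (szp r t η n).2),
     Polynomial.C ((t : ℂ)⁻¹) * ((szp r t η n).2
        - Polynomial.C ((r : ℂ) * ec (η n)) * (Polynomial.X * (szp r t η n).1)))

lemma szp_deg (r t : ℝ) (η : ℕ → Torus) (n : ℕ) :
    (szp r t η n).1.natDegree ≤ n ∧ (szp r t η n).2.natDegree ≤ n := by
  induction n with
  | zero => simp [szp]
  | succ n ih =>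
    obtain ⟨h1, h2⟩ := ih
    have hX : (Polynomial.X * (szp r t η n).1).natDegree ≤ n + 1 := by
      refine Polynomial.natDegree_mul_le.trans ?_
      have := Polynomial.natDegree_X_le (R := ℂ)
      omega
    constructor
    · refine (Polynomial.natDegree_C_mul_le _ _).trans ?_
      refine (Polynomial.natDegree_sub_le _ _).trans (max_le hX ?_)
      exact (Polynomial.natDegree_C_mul_le _ _).trans (by omega)
    · refine (Polynomial.natDegree_C_mul_le _ _).trans ?_
      refine (Polynomial.natDegree_sub_le _ _).trans (max_le (by omega) ?_)
      exact (Polynomial.natDegree_C_mul_le _ _).trans hX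

/-- values -/
def pv (r t : ℝ) (η : ℕ → Torus) (n : ℕ) (z : ℂ) : ℂ := (szp r t η n).1.eval z
def qv (r t : ℝ) (η : ℕ → Torus) (n : ℕ) (z : ℂ) : ℂ := (szp r t η n).2.eval z

lemma pv_zero (r t : ℝ) (η : ℕ → Torus) (z : ℂ) : pv r t η 0 z = 1 := by simp [pv, szp]
lemma qv_zero (r t : ℝ) (η : ℕ → Torus) (z : ℂ) : qv r t η 0 z = 1 := by simp [qv, szp]
lemma pv_succ (r t : ℝ) (η : ℕ → Torus) (n : ℕ) (z : ℂ) :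
    pv r t η (n+1) z = (t:ℂ)⁻¹ * (z * pv r t η n z - r * ec (-(η n)) * qv r t η n z) := by
  simp [pv, qv, szp]
lemma qv_succ (r t : ℝ) (η : ℕ → Torus) (n : ℕ) (z : ℂ) :
    qv r t η (n+1) z = (t:ℂ)⁻¹ * (qv r t η n z - r * ec (η n) * (z * pv r t η n z)) := by
  simp [pv, qv, szp]

lemma pv_sum (r t : ℝ) (η : ℕ → Torus) (n : ℕ) :
    ∃ c : ℕ → ℂ, ∀ z, pv r t η n z = ∑ i ∈ Finset.range (n+1), c i * z ^ i :=
  ⟨_, fun z => Polynomial.eval_eq_sum_range' (Nat.lt_succ_of_le (szp_deg r t η n).1) z⟩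
lemma qv_sum (r t : ℝ) (η : ℕ → Torus) (n : ℕ) :
    ∃ c : ℕ → ℂ, ∀ z, qv r t η n z = ∑ i ∈ Finset.range (n+1), c i * z ^ i :=
  ⟨_, fun z => Polynomial.eval_eq_sum_range' (Nat.lt_succ_of_le (szp_deg r t η n).2) z⟩

lemma pv_cont (r t : ℝ) (η : ℕ → Torus) (n : ℕ) : Continuous (pv r t η n) :=
  Polynomial.continuous _
lemma qv_diff (r t : ℝ) (η : ℕ → Torus) (n : ℕ) : Differentiable ℂ (qv r t η n) :=
  Polynomial.differentiable _
lemma qv_cont (r t : ℝ) (η : ℕ → Torus) (n : ℕ) : Continuous (qv r t η n) :=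
  Polynomial.continuous _

section
variable {r t : ℝ} (hr0 : 0 < r) (hr1 : r < 1) (ht0 : 0 < t) (ht : t ^ 2 = 1 - r ^ 2)
  (η : ℕ → Torus)

include hr0 hr1 ht0 ht in
lemma qv_ne (n : ℕ) (z : ℂ) (hz : ‖z‖ ≤ 1) :
    qv r t η n z ≠ 0 ∧ ‖pv r t η n z‖ ≤ ‖qv r t η n z‖ := by
  induction n with
  | zero => simp [pv_zero, qv_zero]
  | succ n ih =>
    obtain ⟨h1, h2⟩ := ih
    set p := pv r t η n z
    set q := qv r t η n z
    have hq : 0 < ‖q‖ := norm_pos_iff.2 h1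
    have hzp : ‖z * p‖ ≤ ‖q‖ := by
      rw [norm_mul]; nlinarith [norm_nonneg p, norm_nonneg z]
    constructor
    · rw [qv_succ]
      apply mul_ne_zero (by simpa using ht0.ne')
      intro h
      have h3 : ‖q‖ = r * ‖z * p‖ := by
        have h4 : q = r * ec (η n) * (z * p) := sub_eq_zero.1 h
        have h5 := congrArg norm h4
        rw [norm_mul _ (z * p), norm_mul, norm_ec] at h5
        simpa [abs_of_pos hr0] using h5
      nlinarith
    · rw [pv_succ, qv_succ, norm_mul, norm_mul]
      apply mul_le_mul_of_nonneg_left _ (norm_nonneg _)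
      set w := z * p
      have key : ‖q - r * ec (η n) * w‖ ^ 2 - ‖w - r * ec (-(η n)) * q‖ ^ 2
          = (1 - r ^ 2) * (‖q‖ ^ 2 - ‖w‖ ^ 2) := by
        have he : ec (η n) * (starRingEnd ℂ) (ec (η n)) = 1 := ec_mul_conj _
        rw [ec_neg']
        apply Complex.ofReal_injective
        push_cast
        simp only [← Complex.mul_conj']
        simp only [map_sub, map_mul, Complex.conj_conj, Complex.conj_ofReal]
        linear_combination (r^2 * (w * (starRingEnd ℂ) w - q * (starRingEnd ℂ) q)) * he
      have : 0 ≤ (1 - r ^ 2) * (‖q‖ ^ 2 - ‖w‖ ^ 2) := by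
        apply mul_nonneg
        · nlinarith
        · nlinarith [norm_nonneg w]
      nlinarith [norm_nonneg (q - r * ec (η n) * w), norm_nonneg (w - r * ec (-(η n)) * q)]

lemma qv_eq (n : ℕ) (ζ : Torus) :
    qv r t η n (ec ζ) = ec ζ ^ n * (starRingEnd ℂ) (pv r t η n (ec ζ)) := by
  have he : ec ζ * (starRingEnd ℂ) (ec ζ) = 1 := ec_mul_conj _
  have hen : ∀ n : ℕ, ec ζ ^ n * (starRingEnd ℂ) (ec ζ) ^ n = 1 := by
    intro n; rw [← mul_pow, he, one_pow]
  induction n with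
  | zero => simp [pv_zero, qv_zero]
  | succ n ih =>
    have ih2 : ec ζ ^ n * (starRingEnd ℂ) (qv r t η n (ec ζ)) = pv r t η n (ec ζ) := by
      rw [ih]; simp only [map_mul, map_pow, Complex.conj_conj]
      linear_combination (pv r t η n (ec ζ)) * hen n
    rw [qv_succ, pv_succ]
    simp only [map_sub, map_mul, map_inv₀, Complex.conj_ofReal, ec_neg', Complex.conj_conj]
    rw [pow_succ]
    linear_combination (t:ℂ)⁻¹ * ih - (t:ℂ)⁻¹ * (r * ec (η n) * ec ζ) * (- ih2)
      - (t:ℂ)⁻¹ * ec ζ ^ n * (starRingEnd ℂ) (pv r t η n (ec ζ)) * he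

lemma norm_qv (n : ℕ) (ζ : Torus) : ‖qv r t η n (ec ζ)‖ = ‖pv r t η n (ec ζ)‖ := by
  rw [qv_eq]; simp [norm_ec]

include hr0 hr1 ht0 ht in
lemma pv_ne (n : ℕ) (ζ : Torus) : pv r t η n (ec ζ) ≠ 0 := by
  rw [← norm_ne_zero_iff, ← norm_qv, norm_ne_zero_iff]
  exact (qv_ne hr0 hr1 ht0 ht η n _ (norm_ec ζ).le).1

end
end

noncomputable section
set_option linter.unusedSectionVars false

lemma cint {f : Torus → ℂ} (hf : Continuous f) (μ : Measure Torus) [IsFiniteMeasure μ] :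
    Integrable f μ :=
  hf.integrable_of_hasCompactSupport (HasCompactSupport.of_compactSpace f)

lemma cintR {f : Torus → ℝ} (hf : Continuous f) (μ : Measure Torus) [IsFiniteMeasure μ] :
    Integrable f μ :=
  hf.integrable_of_hasCompactSupport (HasCompactSupport.of_compactSpace f)

def pz (r t : ℝ) (η : ℕ → Torus) (n : ℕ) (ζ : Torus) : ℂ := pv r t η n (ec ζ)
def qz (r t : ℝ) (η : ℕ → Torus) (n : ℕ) (ζ : Torus) : ℂ := qv r t η n (ec ζ)
def dz (r t : ℝ) (η : ℕ → Torus) (N : ℕ) (ζ : Torus) : ℂ :=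
  (pz r t η N ζ * (starRingEnd ℂ) (pz r t η N ζ))⁻¹
/-- generalized eigenfunction -/
def xz (r t : ℝ) (η : ℕ → Torus) (n : ℕ) (ζ : Torus) : ℂ :=
  ec ζ ^ (-(((n+1)/2 : ℕ) : ℤ)) * (if n % 2 = 0 then pz r t η n ζ else qz r t η n ζ)

lemma pz_cont (r t : ℝ) (η : ℕ → Torus) (n : ℕ) : Continuous (pz r t η n) :=
  (pv_cont r t η n).comp continuous_ec
lemma qz_cont (r t : ℝ) (η : ℕ → Torus) (n : ℕ) : Continuous (qz r t η n) :=
  (qv_cont r t η n).comp continuous_ec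
lemma ecz_cont (m : ℤ) : Continuous (fun ζ => ec ζ ^ m) :=
  continuous_ec.zpow₀ m (fun a => Or.inl (ec_ne a))
lemma xz_cont (r t : ℝ) (η : ℕ → Torus) (n : ℕ) : Continuous (xz r t η n) := by
  unfold xz
  split_ifs
  · exact (ecz_cont _).mul (pz_cont r t η n)
  · exact (ecz_cont _).mul (qz_cont r t η n)

lemma norm_xz (r t : ℝ) (η : ℕ → Torus) (n : ℕ) (ζ : Torus) :
    ‖xz r t η n ζ‖ = ‖pz r t η n ζ‖ := by
  unfold xz
  rw [norm_mul, norm_zpow, norm_ec, one_zpow, one_mul]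
  split_ifs
  · rfl
  · exact norm_qv η n ζ

lemma conj_eczpow (ζ : Torus) (m : ℤ) : (starRingEnd ℂ) (ec ζ ^ m) = ec ζ ^ (-m) := by
  rw [map_zpow₀, conj_ec, inv_zpow, zpow_neg]

section
variable {r t : ℝ} (hr0 : 0 < r) (hr1 : r < 1) (ht0 : 0 < t) (ht : t ^ 2 = 1 - r ^ 2)
  (η : ℕ → Torus)

include hr0 hr1 ht0 ht

lemma pz_ne (n : ℕ) (ζ : Torus) : pz r t η n ζ ≠ 0 := pv_ne hr0 hr1 ht0 ht η n ζ

lemma qz_ne (n : ℕ) (ζ : Torus) : qz r t η n ζ ≠ 0 :=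
  (qv_ne hr0 hr1 ht0 ht η n _ (norm_ec ζ).le).1

lemma dz_cont (n : ℕ) : Continuous (dz r t η n) := by
  unfold dz
  have := pz_cont r t η n
  refine Continuous.inv₀ (by fun_prop) fun ζ => ?_
  have := pz_ne hr0 hr1 ht0 ht η n ζ
  simpa using this

lemma zp_eq (n : ℕ) (ζ : Torus) : ec ζ * pz r t η n ζ
    = (t:ℂ)⁻¹ * (pz r t η (n+1) ζ + r * ec (-(η n)) * qz r t η (n+1) ζ) := by
  have htc : (t:ℂ) ≠ 0 := by exact_mod_cast ht0.ne'
  have ht' : (t:ℂ)^2 = 1 - r^2 := by exact_mod_cast ht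
  unfold pz qz
  rw [pv_succ, qv_succ, ec_neg]
  have := ec_ne (η n)
  field_simp
  linear_combination ec (η n) * ec ζ * pv r t η n (ec ζ) * ht'

lemma q_eq (n : ℕ) (ζ : Torus) : qz r t η n ζ
    = (t:ℂ)⁻¹ * (qz r t η (n+1) ζ + r * ec (η n) * pz r t η (n+1) ζ) := by
  have htc : (t:ℂ) ≠ 0 := by exact_mod_cast ht0.ne'
  have ht' : (t:ℂ)^2 = 1 - r^2 := by exact_mod_cast ht
  unfold pz qz
  rw [pv_succ, qv_succ, ec_neg]
  have := ec_ne (η n)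
  field_simp
  linear_combination qv r t η n (ec ζ) * ht'

lemma orth_base (N : ℕ) :
    (∀ m < N, ∫ ζ, ec ζ ^ (-(m:ℤ)) * pz r t η N ζ * dz r t η N ζ ∂hh = 0) ∧
    (∀ m, 1 ≤ m → m ≤ N → ∫ ζ, ec ζ ^ (-(m:ℤ)) * qz r t η N ζ * dz r t η N ζ ∂hh = 0) ∧
    ∫ ζ, pz r t η N ζ * (starRingEnd ℂ) (pz r t η N ζ) * dz r t η N ζ ∂hh = 1 := by
  have hmv : ∀ k : ℕ, 1 ≤ k → ∫ ζ, ec ζ ^ k * (qz r t η N ζ)⁻¹ ∂hh = 0 := by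
    intro k hk
    have := mean_value (fun z => z ^ k * (qv r t η N z)⁻¹) (fun z hz => by
      have := qv_diff r t η N z
      exact (differentiableAt_id.pow k).mul (this.inv (qv_ne hr0 hr1 ht0 ht η N z hz).1))
    unfold qz
    rw [this, zero_pow (by omega), zero_mul]
  have hq : ∀ ζ, qz r t η N ζ = ec ζ ^ N * (starRingEnd ℂ) (pz r t η N ζ) := qv_eq η N
  have hpn : ∀ ζ, pz r t η N ζ ≠ 0 := pz_ne hr0 hr1 ht0 ht η N
  refine ⟨?_, ?_, ?_⟩
  · intro m hm
    rw [← hmv (N - m) (by omega)]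
    congr 1; ext ζ
    have h1 := hpn ζ
    have h2 := ec_ne ζ
    have h3 : (starRingEnd ℂ) (pz r t η N ζ) ≠ 0 := by simpa using h1
    rw [dz, hq, zpow_neg, zpow_natCast, pow_sub₀ _ h2 hm.le]
    field_simp
  · intro m hm1 hm
    have h0 := hmv m hm1
    have h0' := congrArg (starRingEnd ℂ) h0
    rw [← integral_conj, map_zero] at h0'
    rw [← h0']
    congr 1; ext ζ
    have h1 := hpn ζ
    have h2 := ec_ne ζ
    have h3 : (starRingEnd ℂ) (pz r t η N ζ) ≠ 0 := by simpa using h1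
    rw [dz, hq, zpow_neg, zpow_natCast]
    simp only [map_mul, map_pow, map_inv₀, Complex.conj_conj, conj_ec, inv_pow]
    field_simp
  · have : ∀ ζ, pz r t η N ζ * (starRingEnd ℂ) (pz r t η N ζ) * dz r t η N ζ = 1 := by
      intro ζ
      have h1 := hpn ζ
      have h3 : (starRingEnd ℂ) (pz r t η N ζ) ≠ 0 := by simpa using h1
      rw [dz, mul_inv_cancel₀ (mul_ne_zero h1 h3)]
    simp [this]

lemma orth_sum (N n : ℕ) (f : Torus → ℂ) (hf : Continuous f)
    (h : ∀ i ≤ n, ∫ ζ, ec ζ ^ (-(i:ℤ)) * f ζ * dz r t η N ζ ∂hh = 0) (c : ℕ → ℂ) :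
    ∫ ζ, (starRingEnd ℂ) (∑ i ∈ Finset.range (n+1), c i * ec ζ ^ i) * f ζ * dz r t η N ζ ∂hh
      = 0 := by
  have hd := dz_cont hr0 hr1 ht0 ht η N
  have : ∀ ζ, (starRingEnd ℂ) (∑ i ∈ Finset.range (n+1), c i * ec ζ ^ i) * f ζ * dz r t η N ζ
      = ∑ i ∈ Finset.range (n+1), (starRingEnd ℂ) (c i) *
        (ec ζ ^ (-(i:ℤ)) * f ζ * dz r t η N ζ) := by
    intro ζ
    rw [map_sum, Finset.sum_mul, Finset.sum_mul]
    apply Finset.sum_congr rfl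
    intro i _
    rw [map_mul, map_pow, conj_ec, zpow_neg, zpow_natCast, inv_pow]
    ring
  simp_rw [this]
  rw [integral_finsetSum]
  · apply Finset.sum_eq_zero
    intro i hi
    rw [integral_const_mul, h i (by simp at hi; omega), mul_zero]
  · intro i _
    apply cint
    exact continuous_const.mul (((ecz_cont _).mul hf).mul hd)

lemma orth (N n : ℕ) (hn : n ≤ N) :
    (∀ m < n, ∫ ζ, ec ζ ^ (-(m:ℤ)) * pz r t η n ζ * dz r t η N ζ ∂hh = 0) ∧
    (∀ m, 1 ≤ m → m ≤ n → ∫ ζ, ec ζ ^ (-(m:ℤ)) * qz r t η n ζ * dz r t η N ζ ∂hh = 0) ∧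
    ∫ ζ, pz r t η n ζ * (starRingEnd ℂ) (pz r t η n ζ) * dz r t η N ζ ∂hh = 1 := by
  have hd := dz_cont hr0 hr1 ht0 ht η N
  have htc : (t:ℂ) ≠ 0 := by exact_mod_cast ht0.ne'
  have ht' : (t:ℂ)^2 = 1 - r^2 := by exact_mod_cast ht
  induction hn using Nat.decreasingInduction with
  | self => exact orth_base hr0 hr1 ht0 ht η N
  | of_succ n hn ih =>
    obtain ⟨ha, hb, hc⟩ := ih
    have hp := pz_cont r t η n
    have hp' := pz_cont r t η (n+1)
    have hq' := qz_cont r t η (n+1)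
    have hq := qz_cont r t η n
    refine ⟨?_, ?_, ?_⟩
    · intro m hm
      have e : ∀ ζ, ec ζ ^ (-(m:ℤ)) * pz r t η n ζ * dz r t η N ζ
        = (t:ℂ)⁻¹ * (ec ζ ^ (-((m+1:ℕ):ℤ)) * pz r t η (n+1) ζ * dz r t η N ζ)
          + (t:ℂ)⁻¹ * (r * ec (-(η n))) *
            (ec ζ ^ (-((m+1:ℕ):ℤ)) * qz r t η (n+1) ζ * dz r t η N ζ) := by
        intro ζ
        have h1 := zp_eq hr0 hr1 ht0 ht η n ζ
        have h2 := ec_ne ζ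
        have : ec ζ ^ (-(m:ℤ)) = ec ζ ^ (-((m+1:ℕ):ℤ)) * ec ζ := by
          rw [← zpow_add_one₀ h2]; congr 1; push_cast; ring
        rw [this]
        linear_combination ec ζ ^ (-((m+1:ℕ):ℤ)) * dz r t η N ζ * h1
      simp_rw [e]
      rw [integral_add, integral_const_mul, integral_const_mul, ha _ (by omega),
        hb _ (by omega) (by omega)]
      · simp
      · exact cint (continuous_const.mul (((ecz_cont _).mul hp').mul hd)) _
      · exact cint (continuous_const.mul (((ecz_cont _).mul hq').mul hd)) _
    · intro m hm1 hm
      have e : ∀ ζ, ec ζ ^ (-(m:ℤ)) * qz r t η n ζ * dz r t η N ζ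
        = (t:ℂ)⁻¹ * (ec ζ ^ (-(m:ℤ)) * qz r t η (n+1) ζ * dz r t η N ζ)
          + (t:ℂ)⁻¹ * (r * ec (η n)) *
            (ec ζ ^ (-(m:ℤ)) * pz r t η (n+1) ζ * dz r t η N ζ) := by
        intro ζ
        have h1 := q_eq hr0 hr1 ht0 ht η n ζ
        linear_combination ec ζ ^ (-(m:ℤ)) * dz r t η N ζ * h1
      simp_rw [e]
      rw [integral_add, integral_const_mul, integral_const_mul, ha _ (by omega),
        hb _ (by omega) (by omega)]
      · simp
      · exact cint (continuous_const.mul (((ecz_cont _).mul hq').mul hd)) _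
      · exact cint (continuous_const.mul (((ecz_cont _).mul hp').mul hd)) _
    · obtain ⟨c, hcq⟩ := qv_sum r t η n
      have h0 : ∫ ζ, (starRingEnd ℂ) (qz r t η n ζ) * pz r t η (n+1) ζ * dz r t η N ζ ∂hh
          = 0 := by
        have := orth_sum hr0 hr1 ht0 ht η N n (pz r t η (n+1)) hp'
          (fun i hi => ha i (by omega)) c
        rw [← this]
        simp only [qz, hcq]
      have h0' := congrArg (starRingEnd ℂ) h0
      rw [← integral_conj, map_zero] at h0'
      have hdc : ∀ ζ, (starRingEnd ℂ) (dz r t η N ζ) = dz r t η N ζ := by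
        intro ζ; simp [dz, mul_comm]
      have e : ∀ ζ, (1 - (r:ℂ)^2) * (pz r t η n ζ * (starRingEnd ℂ) (pz r t η n ζ) * dz r t η N ζ)
        = (t:ℂ)^2 * (pz r t η (n+1) ζ * (starRingEnd ℂ) (pz r t η (n+1) ζ) * dz r t η N ζ)
          + (t * r * ec (η n) *
            ((starRingEnd ℂ) (qz r t η n ζ) * pz r t η (n+1) ζ * dz r t η N ζ)
          + t * r * ec (-(η n)) *
            (starRingEnd ℂ) ((starRingEnd ℂ) (qz r t η n ζ) * pz r t η (n+1) ζ * dz r t η N ζ)) := by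
        intro ζ
        have h1 : ec ζ * pz r t η n ζ = t * pz r t η (n+1) ζ + r * ec (-(η n)) * qz r t η n ζ := by
          unfold pz qz
          rw [pv_succ]; field_simp; ring
        have h2 := congrArg (starRingEnd ℂ) h1
        have h3 : pz r t η n ζ * (starRingEnd ℂ) (pz r t η n ζ)
           = qz r t η n ζ * (starRingEnd ℂ) (qz r t η n ζ) := by
          simp only [Complex.mul_conj, Complex.normSq_eq_norm_sq, pz, qz, norm_qv]
        have h4 : ec ζ * (starRingEnd ℂ) (ec ζ) = 1 := ec_mul_conj _
        have h5 : ec (η n) * (starRingEnd ℂ) (ec (η n)) = 1 := ec_mul_conj _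
        have h6 := congrArg₂ (· * ·) h1 h2
        simp only [map_add, map_mul, ec_neg', Complex.conj_ofReal, Complex.conj_conj, hdc] at h6 ⊢
        linear_combination dz r t η N ζ * h6
         - dz r t η N ζ * pz r t η n ζ * (starRingEnd ℂ) (pz r t η n ζ) * h4
         - r^2 * dz r t η N ζ * h3
         + r^2 * dz r t η N ζ * qz r t η n ζ * (starRingEnd ℂ) (qz r t η n ζ) * h5
      have e2 := integral_congr_ae (μ := hh) (Filter.Eventually.of_forall e)
      rw [integral_const_mul, integral_add, integral_add, integral_const_mul, integral_const_mul,
        integral_const_mul, hc, h0, h0', ← ht'] at e2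
      · have : (t:ℂ)^2 ≠ 0 := pow_ne_zero _ htc
        have e3 : (t:ℂ)^2 * (∫ ζ, pz r t η n ζ * (starRingEnd ℂ) (pz r t η n ζ) * dz r t η N ζ ∂hh)
          = (t:ℂ)^2 * 1 := by rw [e2]; ring
        exact mul_left_cancel₀ this e3
      · apply cint; fun_prop
      · apply cint; fun_prop
      · apply cint; fun_prop
      · apply cint; fun_prop

lemma xz_orth_lt (N j k : ℕ) (hjk : j < k) (hk : k ≤ N) :
    ∫ ζ, (starRingEnd ℂ) (xz r t η j ζ) * xz r t η k ζ * dz r t η N ζ ∂hh = 0 := by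
  obtain ⟨c, hc⟩ : ∃ c : ℕ → ℂ, ∀ ζ, (if j % 2 = 0 then pz r t η j ζ else qz r t η j ζ)
      = ∑ i ∈ Finset.range (j+1), c i * ec ζ ^ i := by
    split_ifs
    · obtain ⟨c, hc⟩ := pv_sum r t η j
      exact ⟨c, fun ζ => hc _⟩
    · obtain ⟨c, hc⟩ := qv_sum r t η j
      exact ⟨c, fun ζ => hc _⟩
  have := orth_sum hr0 hr1 ht0 ht η N j
    (fun ζ => ec ζ ^ ((((j+1)/2 : ℕ) : ℤ)) * xz r t η k ζ)
    ((ecz_cont _).mul (xz_cont r t η k)) ?_ c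
  · rw [← this]
    congr 1; ext ζ
    rw [← hc]
    conv_lhs => rw [xz]
    rw [map_mul, conj_eczpow, neg_neg]
    ring
  · intro i hi
    obtain ⟨ha, hb, -⟩ := orth hr0 hr1 ht0 ht η N k hk
    have e : ∀ ζ, ec ζ ^ (-(i:ℤ)) * (ec ζ ^ ((((j+1)/2 : ℕ) : ℤ)) * xz r t η k ζ) * dz r t η N ζ
      = ec ζ ^ (-((i + (k+1)/2 - (j+1)/2 : ℕ):ℤ)) *
        (if k % 2 = 0 then pz r t η k ζ else qz r t η k ζ) * dz r t η N ζ := by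
      intro ζ
      rw [xz, ← mul_assoc, ← mul_assoc, ← zpow_add₀ (ec_ne ζ), ← zpow_add₀ (ec_ne ζ)]
      congr 3
      omega
    simp_rw [e]
    split_ifs with h
    · apply ha; omega
    · apply hb <;> omega

lemma xz_orth (N j k : ℕ) (hj : j ≤ N) (hk : k ≤ N) :
    ∫ ζ, (starRingEnd ℂ) (xz r t η j ζ) * xz r t η k ζ * dz r t η N ζ ∂hh
      = if j = k then 1 else 0 := by
  rcases lt_trichotomy j k with h | h | h
  · rw [xz_orth_lt hr0 hr1 ht0 ht η N j k h hk, if_neg h.ne]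
  · subst h
    rw [if_pos rfl, ← (orth hr0 hr1 ht0 ht η N j hj).2.2]
    congr 1; ext ζ
    congr 1
    rw [mul_comm, Complex.mul_conj, Complex.mul_conj, Complex.normSq_eq_norm_sq,
      Complex.normSq_eq_norm_sq, norm_xz]
  · rw [if_neg h.ne']
    have h0 := congrArg (starRingEnd ℂ) (xz_orth_lt hr0 hr1 ht0 ht η N k j h hj)
    rw [← integral_conj, map_zero] at h0
    rw [← h0]
    congr 1; ext ζ
    simp [dz]
    ring

end
end

noncomputable section
set_option linter.unusedSectionVars false

section
variable {r t : ℝ} (hr0 : 0 < r) (hr1 : r < 1) (ht0 : 0 < t) (ht : t ^ 2 = 1 - r ^ 2)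
  (η : ℕ → Torus)
include hr0 hr1 ht0 ht

lemma row_hasSum (ζ : Torus) (k : ℕ) :
    HasSum (fun j => CentA r t η k j * xz r t η j ζ) (ec ζ * xz r t η k ζ) := by
  have htc : (t:ℂ) ≠ 0 := by exact_mod_cast ht0.ne'
  have ht' : (t:ℂ)^2 = 1 - r^2 := by exact_mod_cast ht
  have hz := ec_ne ζ
  have hsmall : ∀ k, (k = 0 ∨ k = 1) →
      HasSum (fun j => CentA r t η k j * xz r t η j ζ) (ec ζ * xz r t η k ζ) := by
    intro k hk
    have h := hasSum_sum_of_ne_finset_zero (L := SummationFilter.unconditional ℕ)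
      (f := fun j => CentA r t η k j * xz r t η j ζ) (s := Finset.range 3) ?_
    · convert h using 1
      have x0 : xz r t η 0 ζ = 1 := by simp [xz, pz, pv_zero]
      have x1 : xz r t η 1 ζ = (ec ζ)⁻¹ * qz r t η 1 ζ := by simp [xz]
      have x2 : xz r t η 2 ζ = (ec ζ)⁻¹ * pz r t η 2 ζ := by simp [xz]
      have e0 := ec_ne (η 0)
      have e1 := ec_ne (η 1)
      simp only [Finset.sum_range_succ, Finset.sum_range_zero, x0, x1, x2]
      rcases hk with rfl | rfl
      · simp only [CentA, x0]
        simp only [pz, qz, pv_succ _ _ _ 1, pv_succ _ _ _ 0, qv_succ _ _ _ 0, pv_zero, qv_zero,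
          ec_neg, ec_sub]
        norm_num
        field_simp
        ring
      · simp only [CentA, x1]
        simp only [pz, qz, pv_succ _ _ _ 1, pv_succ _ _ _ 0, qv_succ _ _ _ 0, pv_zero, qv_zero,
          ec_neg, ec_sub]
        norm_num
        field_simp
        linear_combination (-ec ζ * ec (η 1)) * ht'
    · intro j hj
      have : 3 ≤ j := by simpa using hj
      rcases hk with rfl | rfl
      · simp [CentA, show j ≠ 0 by omega, show j ≠ 1 by omega, show j ≠ 2 by omega]
      · simp [CentA, show j ≠ 0 by omega, show j ≠ 1 by omega, show j ≠ 2 by omega]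
  by_cases hk : k = 0 ∨ k = 1
  · exact hsmall k hk
  push Not at hk
  obtain ⟨b, hb⟩ : ∃ b, k = 2 * b + 2 ∨ k = 2 * b + 3 := ⟨(k-2)/2, by omega⟩
  have h := hasSum_sum_of_ne_finset_zero (L := SummationFilter.unconditional ℕ)
      (f := fun j => CentA r t η k j * xz r t η j ζ)
      (s := {2*b+1, 2*b+2, 2*b+3, 2*b+4}) ?_
  · convert h using 1
    set c : ℂ := ec ζ ^ (-((b + 2 : ℕ) : ℤ)) with hc
    have hcz : ec ζ ^ (-((b + 1 : ℕ) : ℤ)) = c * ec ζ := by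
      rw [hc, ← zpow_add_one₀ hz]; congr 1
    have x1 : xz r t η (2*b+1) ζ = c * ec ζ * qz r t η (2*b+1) ζ := by
      rw [xz, ← hcz, if_neg (by omega)]; congr 4; omega
    have x2 : xz r t η (2*b+2) ζ = c * ec ζ * pz r t η (2*b+2) ζ := by
      rw [xz, ← hcz, if_pos (by omega)]; congr 4; omega
    have x3 : xz r t η (2*b+3) ζ = c * qz r t η (2*b+3) ζ := by
      rw [xz, hc, if_neg (by omega)]; congr 4; omega
    have x4 : xz r t η (2*b+4) ζ = c * pz r t η (2*b+4) ζ := by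
      rw [xz, hc, if_pos (by omega)]; congr 4; omega
    have q1 := q_eq hr0 hr1 ht0 ht η (2*b+1) ζ
    have p3 : pz r t η (2*b+3) ζ = _ := pv_succ r t η (2*b+2) (ec ζ)
    have q3 : qz r t η (2*b+3) ζ = _ := qv_succ r t η (2*b+2) (ec ζ)
    have p4 : pz r t η (2*b+4) ζ = _ := pv_succ r t η (2*b+3) (ec ζ)
    change _ = (t:ℂ)⁻¹ * (ec ζ * pz r t η (2*b+2) ζ -
      r * ec (-(η (2*b+2))) * qz r t η (2*b+2) ζ) at p3
    change _ = (t:ℂ)⁻¹ * (qz r t η (2*b+2) ζ -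
      r * ec (η (2*b+2)) * (ec ζ * pz r t η (2*b+2) ζ)) at q3
    change _ = (t:ℂ)⁻¹ * (ec ζ * pz r t η (2*b+3) ζ -
      r * ec (-(η (2*b+3))) * qz r t η (2*b+3) ζ) at p4
    change _ = (t:ℂ)⁻¹ * (qz r t η (2*b+2) ζ + r * ec (η (2*b+1)) * pz r t η (2*b+2) ζ) at q1
    rw [p3, q3] at p4
    rw [Finset.sum_insert (by simp), Finset.sum_insert (by simp), Finset.sum_insert (by simp),
      Finset.sum_singleton, x1, x2, x3, x4, q1, q3, p4]
    generalize pz r t η (2*b+2) ζ = P at *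
    generalize qz r t η (2*b+2) ζ = Q at *
    have e1 := ec_ne (η (2*b+1))
    have e2 := ec_ne (η (2*b+2))
    have e3 := ec_ne (η (2*b+3))
    rcases hb with rfl | rfl
    · rw [x2]
      have m0 : (2 * b + 2) % 2 = 0 := by omega
      have c1 : CentA r t η (2*b+2) (2*b+1) = ((r*t : ℝ) : ℂ) * ec (-(η (2*b+2))) := by
        simp [CentA]
      have c2 : CentA r t η (2*b+2) (2*b+2) =
          -((r^2 : ℝ) : ℂ) * ec (η (2*b+1) - η (2*b+2)) := by
        simp [CentA]
      have c3 : CentA r t η (2*b+2) (2*b+3) = ((r*t : ℝ) : ℂ) * ec (-(η (2*b+3))) := by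
        simp [CentA]
      have c4 : CentA r t η (2*b+2) (2*b+4) = ((t^2 : ℝ) : ℂ) := by
        simp [CentA]
      rw [c1, c2, c3, c4]
      push_cast
      simp only [ec_neg, ec_sub]
      field_simp
      ring
    · rw [x3, q3]
      have m0 : (2 * b + 3) % 2 = 1 := by omega
      have c1 : CentA r t η (2*b+3) (2*b+1) = ((t^2 : ℝ) : ℂ) := by
        simp [CentA, m0]
      have c2 : CentA r t η (2*b+3) (2*b+2) = -((r*t : ℝ) : ℂ) * ec (η (2*b+1)) := by
        simp [CentA, m0]
      have c3 : CentA r t η (2*b+3) (2*b+3) =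
          -((r^2 : ℝ) : ℂ) * ec (η (2*b+2) - η (2*b+3)) := by
        simp [CentA, m0]
      have c4 : CentA r t η (2*b+3) (2*b+4) = -((r*t : ℝ) : ℂ) * ec (η (2*b+2)) := by
        simp [CentA, m0]
      rw [c1, c2, c3, c4]
      push_cast
      simp only [ec_neg, ec_sub]
      field_simp
      linear_combination (-(ec ζ * c * Q * ec (η (2*b+3)))) * ht'
  · intro j hj
    simp only [Finset.mem_insert, Finset.mem_singleton, not_or] at hj
    rcases hb with rfl | rfl
    · have m0 : (2 * b + 2) % 2 = 0 := by omega
      rw [CentA, if_neg (by omega), if_neg (by omega), if_pos m0, if_neg (by omega),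
        if_neg (by omega), if_neg (by omega), if_neg (by omega), zero_mul]
    · have m0 : (2 * b + 3) % 2 = 1 := by omega
      rw [CentA, if_neg (by omega), if_neg (by omega), if_neg (by omega), if_neg (by omega),
        if_neg (by omega), if_neg (by omega), if_neg (by omega), zero_mul]

lemma inner_en (k : ℕ) (ψ : Hn) : inner (𝕜 := ℂ) (en k) ψ = ψ k := by
  simp [en, lp.inner_single_left]

lemma eigvec (C : Hn →L[ℂ] Hn)
    (hC : ∀ k j, inner (𝕜 := ℂ) (en k) (C (en j)) = CentA r t η k j)
    (ζ : Torus) (ψ : Hn) (hψ : ∀ k, ψ k = xz r t η k ζ) : C ψ = ec ζ • ψ := by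
  ext k
  have h1 : HasSum (fun j => lp.single 2 j (ψ j)) ψ := lp.hasSum_single (by norm_num) ψ
  have h2 := (innerSL ℂ (en k)).hasSum (C.hasSum h1)
  have h3 : ∀ j, (innerSL ℂ (en k)) (C (lp.single 2 j (ψ j))) =
      CentA r t η k j * xz r t η j ζ := by
    intro j
    have : lp.single 2 j (ψ j) = (ψ j) • (en j) := by
      rw [en, ← lp.single_smul]; simp
    rw [this, map_smul, map_smul, innerSL_apply_apply, hC, hψ, smul_eq_mul, mul_comm]
  simp only [h3] at h2
  rw [innerSL_apply_apply, inner_en hr0 hr1 ht0 ht] at h2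
  rw [h2.unique (row_hasSum hr0 hr1 ht0 ht η ζ k)]
  simp [hψ]

lemma criterion (C : Hn →L[ℂ] Hn)
    (hC : ∀ k j, inner (𝕜 := ℂ) (en k) (C (en j)) = CentA r t η k j)
    (μ : Measure Torus) [IsFiniteMeasure μ]
    (horth : ∀ j k, ∫ ζ, (starRingEnd ℂ) (xz r t η j ζ) * xz r t η k ζ ∂μ = if j = k then 1 else 0)
    (hsum : Summable fun k => ∫ ζ, ‖xz r t η k ζ‖ ∂μ) :
    (Submodule.span ℂ {ψ : Hn | ψ ≠ 0 ∧ ∃ μ : ℂ, C ψ = μ • ψ}).topologicalClosure = ⊤ := by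
  rw [Submodule.topologicalClosure_eq_top_iff, Submodule.eq_bot_iff]
  intro ψ hψ
  rw [Submodule.mem_orthogonal] at hψ
  have hcx := xz_cont r t η
  -- a.e. summability
  have hint : ∀ k, Integrable (fun ζ => ‖xz r t η k ζ‖) μ := fun k => cintR (hcx k).norm μ
  have hae : ∀ᵐ ζ ∂μ, Summable fun k => ‖xz r t η k ζ‖ := by
    have h1 : ∑' k, ∫⁻ ζ, ‖xz r t η k ζ‖ₑ ∂μ ≠ ⊤ := by
      have : ∀ k, ∫⁻ ζ, ‖xz r t η k ζ‖ₑ ∂μ = ENNReal.ofReal (∫ ζ, ‖xz r t η k ζ‖ ∂μ) := by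
        intro k
        rw [ofReal_integral_eq_lintegral_ofReal (hint k) (Filter.Eventually.of_forall fun _ => norm_nonneg _)]
        simp
      simp_rw [this]
      exact hsum.tsum_ofReal_ne_top
    rw [← lintegral_tsum (fun k => (hcx k).enorm.measurable.aemeasurable)] at h1
    filter_upwards [ae_lt_top' (by
      apply AEMeasurable.tsum
      exact fun k => (hcx k).enorm.measurable.aemeasurable) h1] with ζ hζ
    have h2 := ENNReal.summable_toReal hζ.ne
    simpa using h2
  have hzero : ∀ᵐ ζ ∂μ, HasSum (fun k => (starRingEnd ℂ) (xz r t η k ζ) * ψ k) 0 := by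
    filter_upwards [hae] with ζ hζ
    have hmem : Memℓp (fun k => xz r t η k ζ) 2 := by
      have : Memℓp (fun k => xz r t η k ζ) 1 := by
        rw [memℓp_gen_iff (by norm_num)]
        simpa using hζ
      exact this.of_exponent_ge (by norm_num)
    let χ : Hn := ⟨fun k => xz r t η k ζ, hmem⟩
    have hχ : ∀ k, χ k = xz r t η k ζ := fun k => rfl
    have heig := eigvec hr0 hr1 ht0 ht η C hC ζ χ hχ
    have hne : χ ≠ 0 := by
      intro h
      have h0 := hχ 0
      rw [h] at h0
      have x0 : xz r t η 0 ζ = 1 := by simp [xz, pz, pv_zero]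
      rw [x0] at h0
      simp at h0
    have h3 := hψ χ (Submodule.subset_span ⟨hne, _, heig⟩)
    have h4 := lp.hasSum_inner (𝕜 := ℂ) χ ψ
    rw [h3] at h4
    refine h4.congr_fun ?_ |> fun h => h
    intro k
    simp [hχ, mul_comm]
  ext j
  have hb : ∃ B : ℝ, ∀ ζ, ‖xz r t η j ζ‖ ≤ B := by
    obtain ⟨B, hB⟩ := isCompact_univ.exists_bound_of_continuousOn (hcx j).continuousOn
    exact ⟨B, fun ζ => hB ζ (Set.mem_univ _)⟩
  obtain ⟨B, hB⟩ := hb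
  have hψn : ∀ k, ‖ψ k‖ ≤ ‖ψ‖ := fun k => lp.norm_apply_le_norm (by norm_num) ψ k
  have h5 := hasSum_integral_of_summable_integral_norm (μ := μ)
    (F := fun k ζ => xz r t η j ζ * ((starRingEnd ℂ) (xz r t η k ζ) * ψ k))
    (fun k => cint (by have := hcx j; have := hcx k; fun_prop) μ) ?_
  · have h6 : ∫ ζ, ∑' k, xz r t η j ζ * ((starRingEnd ℂ) (xz r t η k ζ) * ψ k) ∂μ = 0 := by
      rw [integral_eq_zero_of_ae]
      filter_upwards [hzero] with ζ hζ
      rw [tsum_mul_left, hζ.tsum_eq]; simp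
    rw [h6] at h5
    have h7 : ∀ k, ∫ ζ, xz r t η j ζ * ((starRingEnd ℂ) (xz r t η k ζ) * ψ k) ∂μ
        = if k = j then ψ j else 0 := by
      intro k
      have : ∀ ζ, xz r t η j ζ * ((starRingEnd ℂ) (xz r t η k ζ) * ψ k)
          = ((starRingEnd ℂ) (xz r t η k ζ) * xz r t η j ζ) * ψ k := fun ζ => by ring
      simp_rw [this]
      rw [integral_mul_const, horth]
      split_ifs with h
      · rw [h, one_mul]
      · simp
    simp only [h7] at h5
    have := h5.unique (hasSum_ite_eq j (ψ j))
    simpa using this.symm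
  · refine Summable.of_nonneg_of_le (fun k => integral_nonneg fun _ => norm_nonneg _) ?_
      (hsum.mul_left (B * ‖ψ‖))
    intro k
    rw [← integral_const_mul]
    apply integral_mono
    · apply cintR; have := hcx j; have := hcx k; fun_prop
    · exact (hint k).const_mul _
    · intro ζ
      simp only [norm_mul, RCLike.norm_conj]
      have := hB ζ
      calc ‖xz r t η j ζ‖ * (‖xz r t η k ζ‖ * ‖ψ k‖) ≤ B * (‖xz r t η k ζ‖ * ‖ψ‖) := by
            gcongr
            · exact (norm_nonneg _).trans this
            · exact hψn k
        _ = _ := by ring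

end
end

noncomputable section
set_option linter.unusedSectionVars false

def wf (r : ℝ) (y : Torus) : ℂ := 1 - r * ec y

def sp (r t : ℝ) (y : Torus) : ℝ := t / ‖wf r y‖

def mob (r : ℝ) (y : Torus) : Torus := y - (2:ℤ) • ((arg (wf r y) : ℝ) : Torus)

def xs (r : ℝ) (ζ x : Torus) (ω : ℕ → Torus) : ℕ → Torus
  | 0 => x
  | n+1 => mob r (xs r ζ x ω n + ζ + ω n)

lemma wf_cont (r : ℝ) : Continuous (wf r) := by
  have := continuous_ec
  unfold wf; fun_prop

section
variable {r t : ℝ} (hr0 : 0 < r) (hr1 : r < 1) (ht0 : 0 < t) (ht : t ^ 2 = 1 - r ^ 2)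
include hr0 hr1 ht0 ht

lemma wf_re (y : Torus) : 0 < (wf r y).re := by
  have h1 : (ec y).re ≤ 1 := (re_le_norm _).trans (norm_ec y).le
  simp only [wf, sub_re, one_re, mul_re, ofReal_re, ofReal_im, zero_mul, sub_zero]
  nlinarith

lemma wf_ne (y : Torus) : wf r y ≠ 0 := by
  intro h; have := wf_re hr0 hr1 ht0 ht y; rw [h] at this; simp at this

lemma wf_norm (y : Torus) : 1 - r ≤ ‖wf r y‖ := by
  have h1 : (ec y).re ≤ 1 := (re_le_norm _).trans (norm_ec y).le
  refine le_trans ?_ (re_le_norm _)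
  simp only [wf, sub_re, one_re, mul_re, ofReal_re, ofReal_im, zero_mul, sub_zero]
  nlinarith

lemma sp_pos (y : Torus) : 0 < sp r t y :=
  div_pos ht0 (norm_pos_iff.2 (wf_ne hr0 hr1 ht0 ht y))

lemma sp_cont : Continuous (sp r t) := by
  have := wf_cont r
  unfold sp
  exact continuous_const.div (by fun_prop) (fun y => norm_ne_zero_iff.2 (wf_ne hr0 hr1 ht0 ht y))

lemma sp_le (y : Torus) : sp r t y ≤ t / (1 - r) :=
  div_le_div_of_nonneg_left ht0.le (by linarith) (wf_norm hr0 hr1 ht0 ht y)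

lemma mob_cont : Continuous (mob r) := by
  have h : Continuous fun y => ((arg (wf r y) : ℝ)) := by
    rw [continuous_iff_continuousAt]
    intro y
    exact (continuousAt_arg (Or.inl (wf_re hr0 hr1 ht0 ht y))).comp (wf_cont r).continuousAt
  have h2 : Continuous fun y => ((arg (wf r y) : ℝ) : Torus) :=
    (AddCircle.continuous_mk' _).comp h
  unfold mob
  fun_prop

lemma ec_coe (a : ℝ) : ec (a : Torus) = exp (a * I) := by
  rw [ec, AddCircle.toCircle_apply_mk]
  simp [Circle.coe_exp]
  

lemma ec_mob (y : Torus) : wf r y * ec (mob r y) = ec y - r := by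
  have hw := wf_ne hr0 hr1 ht0 ht y
  set w := wf r y with hwd
  have h1 : (‖w‖:ℂ) * ec ((arg w : ℝ) : Torus) = w := by
    rw [ec_coe hr0 hr1 ht0 ht, norm_mul_exp_arg_mul_I]
  set e := ec ((arg w : ℝ) : Torus) with he
  have hne : e ≠ 0 := ec_ne _
  have h2 : (starRingEnd ℂ) w = ‖w‖ * e⁻¹ := by
    nth_rw 1 [← h1]; rw [map_mul, conj_ofReal, he, conj_ec]
  have h3 : (starRingEnd ℂ) w = 1 - r * (ec y)⁻¹ := by
    rw [hwd, wf]; simp [conj_ec]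
  have h4 : ec (mob r y) = ec y * (e * e)⁻¹ := by
    rw [mob, ec_sub, two_zsmul, ec_add]
  have hy := ec_ne y
  have h5 : w * (e*e)⁻¹ = (starRingEnd ℂ) w := by
    rw [h2]; nth_rw 1 [← h1]; field_simp
  rw [h4]
  calc w * (ec y * (e*e)⁻¹) = ec y * (w * (e*e)⁻¹) := by ring
    _ = ec y - r := by rw [h5, h3]; field_simp

variable (ζ : Torus) (ω : ℕ → Torus)

lemma chain (n : ℕ) : ec (xs r ζ 0 ω n + ζ + ω n) * qz r t (fun m => ∑ i ∈ Finset.range (m+1), ω i) n ζ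
    = ec (∑ i ∈ Finset.range (n+1), ω i) * (ec ζ * pz r t (fun m => ∑ i ∈ Finset.range (m+1), ω i) n ζ) := by
  set η : ℕ → Torus := (fun m => ∑ i ∈ Finset.range (m+1), ω i) with hη
  induction n with
  | zero => simp [xs, pz, qz, pv_zero, qv_zero, ec_add, mul_comm]
  | succ n ih =>
    have h1 : pz r t η (n+1) ζ = _ := pv_succ r t η n (ec ζ)
    have h2 : qz r t η (n+1) ζ = _ := qv_succ r t η n (ec ζ)
    change _ = (t:ℂ)⁻¹ * (ec ζ * pz r t η n ζ - r * ec (-(η n)) * qz r t η n ζ) at h1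
    change _ = (t:ℂ)⁻¹ * (qz r t η n ζ - r * ec (η n) * (ec ζ * pz r t η n ζ)) at h2
    rw [Finset.sum_range_succ, ec_add, ec_add, ec_add, xs]
    change _ = ec (η n) * ec (ω (n+1)) * _
    change _ = ec (η n) * _ at ih
    set y := xs r ζ 0 ω n + ζ + ω n with hy
    have hm := ec_mob hr0 hr1 ht0 ht y
    have hen := ec_ne (η n)
    rw [h1, h2]
    have e1 : qz r t η n ζ - r * ec (η n) * (ec ζ * pz r t η n ζ) = wf r y * qz r t η n ζ := by
      rw [wf]; linear_combination r * ih
    have e2 : ec (η n) * (ec ζ * pz r t η n ζ - r * ec (-(η n)) * qz r t η n ζ) = (ec y - r) * qz r t η n ζ := by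
      rw [ec_neg]; field_simp; linear_combination -ih
    rw [e1]
    linear_combination (t:ℂ)⁻¹ * ec ζ * ec (ω (n+1)) * (qz r t η n ζ * hm - e2)

lemma norm_pz (n : ℕ) : ‖pz r t (fun m => ∑ i ∈ Finset.range (m+1), ω i) n ζ‖⁻¹
    = ∏ i ∈ Finset.range n, sp r t (xs r ζ 0 ω i + ζ + ω i) := by
  set η : ℕ → Torus := (fun m => ∑ i ∈ Finset.range (m+1), ω i) with hη
  have : ∀ n, ‖pz r t η n ζ‖ = ‖qz r t η n ζ‖ := fun n => (norm_qv η n ζ).symm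
  rw [this]
  induction n with
  | zero => simp [qz, qv_zero]
  | succ n ih =>
    rw [Finset.prod_range_succ, ← ih]
    have h2 : qz r t η (n+1) ζ = _ := qv_succ r t η n (ec ζ)
    change _ = (t:ℂ)⁻¹ * (qz r t η n ζ - r * ec (η n) * (ec ζ * pz r t η n ζ)) at h2
    have ch := chain hr0 hr1 ht0 ht ζ ω n
    rw [← hη] at ch
    change _ = ec (η n) * _ at ch
    set y := xs r ζ 0 ω n + ζ + ω n with hy
    have e1 : qz r t η n ζ - r * ec (η n) * (ec ζ * pz r t η n ζ) = wf r y * qz r t η n ζ := by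
      rw [wf]; linear_combination r * ch
    rw [h2, e1, sp]
    simp [abs_of_pos ht0]
    ring

lemma xs_cont (n : ℕ) : Continuous fun q : Torus × Torus × (ℕ → Torus) => xs r q.1 q.2.1 q.2.2 n := by
  induction n with
  | zero => simp only [xs]; fun_prop
  | succ n ih =>
    simp only [xs]
    have := mob_cont hr0 hr1 ht0 ht
    fun_prop

end

lemma xs_shift (r : ℝ) (ζ x : Torus) (ω : ℕ → Torus) (n : ℕ) :
    xs r ζ x ω (n+1) = xs r ζ (mob r (x + ζ + ω 0)) (fun i => ω (i+1)) n := by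
  induction n with
  | zero => simp [xs]
  | succ n ih => rw [xs, ih, xs]

end

noncomputable section
set_option linter.unusedSectionVars false

lemma fourier_ext (μ ν : Measure Torus) [IsFiniteMeasure μ] [IsFiniteMeasure ν]
    (h : ∀ n : ℤ, ∫ y, ec y ^ n ∂μ = ∫ y, ec y ^ n ∂ν) : μ = ν := by
  have key : ∀ (ρ : Measure Torus) [IsFiniteMeasure ρ], 
      ∃ L : C(Torus, ℂ) →L[ℂ] ℂ, ∀ f : C(Torus, ℂ), L f = ∫ y, f y ∂ρ := by
    intro ρ _
    refine ⟨LinearMap.mkContinuous 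
      { toFun := fun f => ∫ y, f y ∂ρ
        map_add' := fun f g => integral_add (cint f.continuous ρ) (cint g.continuous ρ)
        map_smul' := fun c f => integral_const_mul c _ } (ρ.real Set.univ) ?_, fun f => rfl⟩
    intro f
    simp only [LinearMap.coe_mk, AddHom.coe_mk]
    rw [mul_comm (ρ.real Set.univ)]
    exact norm_integral_le_of_norm_le_const (Filter.Eventually.of_forall fun y => f.norm_coe_le_norm y)
  obtain ⟨L1, hL1⟩ := key μ
  obtain ⟨L2, hL2⟩ := key ν
  have hL : L1 = L2 := by
    apply ContinuousLinearMap.ext_on (s := Set.range (@fourier (2 * Real.pi)))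
    · have := span_fourier_closure_eq_top (T := 2 * Real.pi)
      rw [dense_iff_closure_eq]
      have h2 := congrArg (fun s : Submodule ℂ C(Torus, ℂ) => (s : Set C(Torus, ℂ))) this
      simpa using h2
    · rintro _ ⟨n, rfl⟩
      rw [hL1, hL2]
      simp only [fourier_eq_ec]
      exact h n
  apply ext_of_forall_integral_eq_of_IsFiniteMeasure
  intro f
  have h1 := hL1 ⟨fun y => (f y : ℂ), by have := f.continuous; fun_prop⟩
  have h2 := hL2 ⟨fun y => (f y : ℂ), by have := f.continuous; fun_prop⟩
  rw [hL, h2] at h1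
  simp only [ContinuousMap.coe_mk] at h1
  rw [integral_complex_ofReal, integral_complex_ofReal] at h1
  exact_mod_cast h1.symm

section
variable {r t : ℝ} (hr0 : 0 < r) (hr1 : r < 1) (ht0 : 0 < t) (ht : t ^ 2 = 1 - r ^ 2)
include hr0 hr1 ht0 ht

lemma sub_ne (y : Torus) : ec y - r ≠ 0 := by
  rw [← ec_mob hr0 hr1 ht0 ht y]
  exact mul_ne_zero (wf_ne hr0 hr1 ht0 ht y) (ec_ne _)

lemma sp_sq (y : Torus) : ((sp r t y ^ 2 : ℝ) : ℂ) = t^2 * ec y / (wf r y * (ec y - r)) := by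
  have hw := wf_ne hr0 hr1 ht0 ht y
  have hs := sub_ne hr0 hr1 ht0 ht y
  have hy := ec_ne y
  have h1 : ((‖wf r y‖:ℂ))^2 = wf r y * (starRingEnd ℂ) (wf r y) := (mul_conj' _).symm
  have h3 : (starRingEnd ℂ) (wf r y) = 1 - r * (ec y)⁻¹ := by
    rw [wf]; simp [conj_ec]
  rw [sp]
  push_cast
  rw [div_pow, h1, h3]
  have : (1 - r * (ec y)⁻¹) = (ec y - r) / ec y := by field_simp
  rw [this]
  field_simp

lemma one_sub_ne (z : ℂ) (hz : ‖z‖ ≤ 1) : 1 - r * z ≠ 0 := by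
  intro h
  have : (r:ℂ) * z = 1 := by linear_combination -h
  have h2 := congrArg norm this
  simp [abs_of_pos hr0] at h2
  nlinarith

lemma mom_pos (n : ℕ) : ∫ y, ((sp r t y ^ 2 : ℝ) : ℂ) * ec (mob r y) ^ (n+1) ∂hh = 0 := by
  have h := mean_value (fun z => t^2 * z * (z - r)^n / (1 - r * z)^(n+2)) ?_
  · simp only [mul_zero, zero_mul, zero_div] at h
    rw [← h]
    congr 1
    ext y
    have hw := wf_ne hr0 hr1 ht0 ht y
    have hs := sub_ne hr0 hr1 ht0 ht y
    have : ec (mob r y) = (ec y - r) / wf r y := by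
      rw [← ec_mob hr0 hr1 ht0 ht y]; field_simp
    rw [sp_sq hr0 hr1 ht0 ht, this]
    change _ = _ / (wf r y) ^ (n+2)
    rw [div_pow, pow_succ (ec y - r), pow_succ (wf r y) n, pow_succ (wf r y) (n+1), pow_succ (wf r y) n]
    field_simp
  · intro z hz
    have := one_sub_ne hr0 hr1 ht0 ht z hz
    have := pow_ne_zero (n+2) this
    fun_prop (disch := assumption)

lemma mom_zero : ∫ y, ((sp r t y ^ 2 : ℝ) : ℂ) ∂hh = 1 := by
  have h1 := mean_value (fun z => 1 / (1 - r * z)) (by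
    intro z hz
    have := one_sub_ne hr0 hr1 ht0 ht z hz
    fun_prop (disch := assumption))
  have h2 := mean_value (fun z => r * z / (1 - r * z)) (by
    intro z hz
    have := one_sub_ne hr0 hr1 ht0 ht z hz
    fun_prop (disch := assumption))
  have h2' := congrArg (starRingEnd ℂ) h2
  rw [← integral_conj] at h2'
  simp only [mul_zero, zero_div, map_zero, sub_zero, div_one] at h1 h2'
  have cw := wf_cont r
  have ce := continuous_ec
  have e : ∀ y : Torus, ((sp r t y ^ 2 : ℝ) : ℂ) = 1 / (1 - r * ec y) + (starRingEnd ℂ) (r * ec y / (1 - r * ec y)) := by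
    intro y
    have hw := wf_ne hr0 hr1 ht0 ht y
    have hs := sub_ne hr0 hr1 ht0 ht y
    have hy := ec_ne y
    rw [sp_sq hr0 hr1 ht0 ht]
    have : (starRingEnd ℂ) (r * ec y / (1 - r * ec y)) = r / (ec y - r) := by
      simp only [map_div₀, map_mul, conj_ofReal, map_sub, map_one, conj_ec]
      have : (1 - r * (ec y)⁻¹) = (ec y - r) / ec y := by field_simp
      rw [this]; field_simp
    rw [this]
    change _ = 1 / wf r y + _
    have ht' : (t:ℂ)^2 = 1 - r^2 := by exact_mod_cast ht
    field_simp
    rw [wf, ht']; ring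
  simp_rw [e]
  rw [integral_add, h1, h2', add_zero]
  · apply cint
    exact continuous_const.div cw (wf_ne hr0 hr1 ht0 ht)
  · apply cint
    exact continuous_conj.comp ((continuous_const.mul ce).div cw (wf_ne hr0 hr1 ht0 ht))

lemma mom (n : ℤ) : ∫ y, ((sp r t y ^ 2 : ℝ) : ℂ) * ec (mob r y) ^ n ∂hh = if n = 0 then 1 else 0 := by
  obtain ⟨m, rfl | rfl⟩ := n.eq_nat_or_neg
  · rcases m with _ | m
    · simpa using mom_zero hr0 hr1 ht0 ht
    · rw [if_neg (by omega)]
      have := mom_pos hr0 hr1 ht0 ht m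
      exact_mod_cast this
  · rcases m with _ | m
    · simpa using mom_zero hr0 hr1 ht0 ht
    · rw [if_neg (by omega)]
      have := congrArg (starRingEnd ℂ) (mom_pos hr0 hr1 ht0 ht m)
      rw [← integral_conj, map_zero] at this
      rw [← this]
      congr 1; ext y
      rw [map_mul, conj_ofReal, map_pow, conj_ec, zpow_neg, inv_pow, zpow_natCast]

lemma mom_hh (n : ℤ) : ∫ y, ec y ^ n ∂hh = if n = 0 then 1 else 0 := by
  have hp : ∀ m : ℕ, ∫ y, ec y ^ (m+1) ∂hh = 0 := by
    intro m
    have := mean_value (fun z => z^(m+1)) (by intro z _; fun_prop)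
    simpa using this
  obtain ⟨m, rfl | rfl⟩ := n.eq_nat_or_neg
  · rcases m with _ | m
    · simp
    · rw [if_neg (by omega)]
      exact_mod_cast hp m
  · rcases m with _ | m
    · simp
    · rw [if_neg (by omega)]
      have := congrArg (starRingEnd ℂ) (hp m)
      rw [← integral_conj, map_zero] at this
      rw [← this]
      congr 1; ext y
      rw [map_pow, conj_ec, zpow_neg, inv_pow, zpow_natCast]

lemma spsq_meas : Measurable fun y => ENNReal.ofReal (sp r t y ^ 2) :=
  ((sp_cont hr0 hr1 ht0 ht).pow 2).measurable.ennreal_ofReal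

lemma map_mob : (hh.withDensity (fun y => ENNReal.ofReal (sp r t y ^ 2))).map (mob r) = hh := by
  have hsc := sp_cont hr0 hr1 ht0 ht
  have hmc := mob_cont hr0 hr1 ht0 ht
  have : IsFiniteMeasure (hh.withDensity (fun y => ENNReal.ofReal (sp r t y ^ 2))) :=
    isFiniteMeasure_withDensity_ofReal (cintR (hsc.pow 2) hh).2
  apply fourier_ext
  intro n
  rw [integral_map hmc.measurable.aemeasurable (ecz_cont n).aestronglyMeasurable,
    integral_withDensity_eq_integral_toReal_smul (spsq_meas hr0 hr1 ht0 ht)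
      (Filter.Eventually.of_forall fun _ => ENNReal.ofReal_lt_top), mom_hh hr0 hr1 ht0 ht,
      ← mom hr0 hr1 ht0 ht n]
  congr 1; ext y
  rw [ENNReal.toReal_ofReal (sq_nonneg _)]
  simp

lemma lint_mob (f : Torus → ENNReal) (hf : Measurable f) :
    ∫⁻ y, ENNReal.ofReal (sp r t y ^ 2) * f (mob r y) ∂hh = ∫⁻ y, f y ∂hh := by
  have hmc := mob_cont hr0 hr1 ht0 ht
  conv_rhs => rw [← map_mob hr0 hr1 ht0 ht, lintegral_map hf hmc.measurable]
  exact (lintegral_withDensity_eq_lintegral_mul _ (spsq_meas hr0 hr1 ht0 ht) (hf.comp hmc.measurable)).symm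

lemma int_mob (f : Torus → ℝ) (hf : Continuous f) :
    ∫ y, sp r t y ^ 2 * f (mob r y) ∂hh = ∫ y, f y ∂hh := by
  have hmc := mob_cont hr0 hr1 ht0 ht
  conv_rhs => rw [← map_mob hr0 hr1 ht0 ht, integral_map hmc.measurable.aemeasurable hf.aestronglyMeasurable,
    integral_withDensity_eq_integral_toReal_smul (spsq_meas hr0 hr1 ht0 ht)
      (Filter.Eventually.of_forall fun _ => ENNReal.ofReal_lt_top)]
  congr 1; ext y
  rw [ENNReal.toReal_ofReal (sq_nonneg _)]
  simp

end
end

noncomputable section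
set_option linter.unusedSectionVars false

lemma good_set (ν : Measure Torus) [IsProbabilityMeasure ν]
    (hac : (volume : Measure Torus).withDensity (ν.rnDeriv volume) ≠ 0) :
    ∃ (G : Set Torus) (c : NNReal), MeasurableSet G ∧ 0 < ν G ∧ ν.restrict G ≤ (c : ENNReal) • hh := by
  obtain ⟨S, hS, hS1, hS2⟩ := Measure.mutuallySingular_singularPart ν (volume : Measure Torus)
  set f := ν.rnDeriv (volume : Measure Torus) with hf
  have hfm : Measurable f := Measure.measurable_rnDeriv _ _
  have hdec : ν = ν.singularPart volume + (volume : Measure Torus).withDensity f := 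
    Measure.haveLebesgueDecomposition_add ν volume
  let G : ℕ → Set Torus := fun n => S ∩ {x | f x ≤ n}
  have hG : ∀ n, MeasurableSet (G n) := fun n => hS.inter (measurableSet_le hfm measurable_const)
  have hGν : ∀ (n) (A : Set Torus), MeasurableSet A → ν (A ∩ G n) = ∫⁻ x in A ∩ G n, f x := by
    intro n A hA
    have h0 : (ν.singularPart volume) (A ∩ G n) = 0 :=
      measure_mono_null (fun x hx => hx.2.1) hS1
    nth_rw 1 [hdec]
    rw [Measure.add_apply, h0, zero_add, withDensity_apply _ (hA.inter (hG n))]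
  have hpos : ∃ n, 0 < ν (G n) := by
    by_contra hcon
    push Not at hcon
    apply hac
    rw [← Measure.measure_univ_eq_zero, withDensity_apply _ MeasurableSet.univ]
    have h1 : ∀ n, ∫⁻ x in G n, f x = 0 := by
      intro n
      have := hGν n Set.univ MeasurableSet.univ
      rw [Set.univ_inter] at this
      rw [← this]
      exact le_antisymm (hcon n) bot_le
    have h2 : ∀ᵐ x ∂(volume : Measure Torus), x ∈ ⋃ n, G n := by
      have ha : ∀ᵐ x ∂(volume : Measure Torus), x ∈ S := by
        rw [ae_iff]; exact hS2
      filter_upwards [ha, Measure.rnDeriv_lt_top ν (volume : Measure Torus)] with x hx hx2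
      obtain ⟨n, hn⟩ := ENNReal.exists_nat_gt hx2.ne
      exact Set.mem_iUnion.2 ⟨n, hx, hn.le⟩
    have h3 : ∫⁻ x in ⋃ n, G n, f x = 0 := by
      refine le_antisymm ((lintegral_iUnion_le _ _).trans ?_) bot_le
      simp [h1]
    rw [← h3, Measure.restrict_univ, Measure.restrict_eq_self_of_ae_mem h2]
  obtain ⟨n, hn⟩ := hpos
  refine ⟨G n, n * (2 * Real.pi).toNNReal, hG n, hn, ?_⟩
  rw [Measure.le_iff]
  intro A hA
  rw [Measure.restrict_apply hA, hGν n A hA]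
  calc ∫⁻ x in A ∩ G n, f x ≤ ∫⁻ x in A ∩ G n, (n : ENNReal) := by
        apply setLIntegral_mono' (hA.inter (hG n))
        intro x hx
        exact hx.2.2
    _ = n * volume (A ∩ G n) := by rw [setLIntegral_const]
    _ ≤ n * volume A := by gcongr; exact Set.inter_subset_left
    _ = _ := by
      rw [AddCircle.volume_eq_smul_haarAddCircle]
      simp only [Measure.smul_apply, smul_eq_mul, ENNReal.coe_mul, ENNReal.coe_natCast]
      rw [mul_assoc]; rfl

lemma hh_small (ε : ENNReal) (hε : 0 < ε) : ∃ δ : ℝ, 0 < δ ∧ hh {y | 1 - (ec y).re < δ} < ε := by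
  have hc : Continuous fun y => 1 - (ec y).re := by have := continuous_ec; fun_prop
  have h := tendsto_measure_iInter_atTop (μ := hh) (s := fun n : ℕ => {y | 1 - (ec y).re < 1 / ((n:ℝ)+1)})
    (fun n => (measurableSet_lt hc.measurable measurable_const).nullMeasurableSet)
    (by
      intro m n hmn y hy
      have h1 : (m:ℝ) ≤ n := by exact_mod_cast hmn
      have h2 : 1 / ((n:ℝ)+1) ≤ 1 / ((m:ℝ)+1) :=
        one_div_le_one_div_of_le (by positivity) (by linarith)
      exact lt_of_lt_of_le hy h2) ⟨0, measure_ne_top _ _⟩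
  have h0 : hh (⋂ n : ℕ, {y | 1 - (ec y).re < 1 / ((n:ℝ)+1)}) = 0 := by
    have : (⋂ n : ℕ, {y : Torus | 1 - (ec y).re < 1 / ((n:ℝ)+1)}) ⊆ {0} := by
      intro y hy
      simp only [Set.mem_iInter, Set.mem_ofPred_eq] at hy
      have h1 : 1 - (ec y).re ≤ 0 := by
        by_contra hcon
        push Not at hcon
        obtain ⟨n, hn⟩ := exists_nat_one_div_lt hcon
        exact lt_asymm hn (hy n)
      have h2 : (ec y).re = 1 := le_antisymm ((re_le_norm _).trans (norm_ec y).le) (by linarith)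
      have h3 : ec y = 1 := by
        have h4 := norm_ec y
        have h5 := Complex.sq_norm (ec y)
        rw [h4, Complex.normSq_apply, h2] at h5
        have : (ec y).im = 0 := by nlinarith
        apply Complex.ext <;> simp [h2, this]
      rw [Set.mem_singleton_iff]
      apply AddCircle.injective_toCircle (T := 2 * Real.pi) (by positivity)
      rw [AddCircle.toCircle_zero]
      exact Circle.ext h3
    refine measure_mono_null this ?_
    have hv := AddCircle.volume_closedBall (2 * Real.pi) (x := (0:Torus)) 0
    rw [Metric.closedBall_zero, AddCircle.volume_eq_smul_haarAddCircle, Measure.smul_apply,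
      smul_eq_mul, mul_zero, min_eq_right (by positivity), ENNReal.ofReal_zero, mul_eq_zero] at hv
    rcases hv with hv | hv
    · rw [ENNReal.ofReal_eq_zero] at hv
      have := Real.pi_pos
      linarith
    · exact hv
  rw [h0] at h
  obtain ⟨n, hn⟩ := (h.eventually (gt_mem_nhds hε)).exists
  exact ⟨_, by positivity, hn⟩

lemma ec_zsmul (n : ℤ) (x : Torus) : ec (n • x) = ec x ^ n := by
  rw [ec, ec, AddCircle.toCircle_zsmul]; simp

lemma fourier_gap (ν : Measure Torus) [IsProbabilityMeasure ν] (G : Set Torus) (c : NNReal)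
    (hνG : 0 < ν G) (hle : ν.restrict G ≤ (c : ENNReal) • hh) :
    ∃ q : ℝ, 0 ≤ q ∧ q < 1 ∧ ∀ n : ℤ, n ≠ 0 → ‖∫ y, ec y ^ n ∂ν‖ ≤ q := by
  obtain ⟨δ, hδ, hsm⟩ := hh_small (ν G / 2 / (c + 1)) (by
    apply ENNReal.div_pos (ENNReal.div_pos hνG.ne' (by simp)).ne' (by finiteness))
  have hpr : 0 < ν.real G := ENNReal.toReal_pos hνG.ne' (measure_ne_top _ _)
  have hmain : ∀ n : ℤ, n ≠ 0 → ‖∫ y, ec y ^ n ∂ν‖ ≤ 1 - δ * (ν.real G / 2) := by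
    intro n hn
    set S := ∫ y, ec y ^ n ∂ν with hS
    obtain ⟨a, ha⟩ : ∃ a : Torus, ec a * S = ‖S‖ := by
      refine ⟨((-(arg S) : ℝ) : Torus), ?_⟩
      have : ec ((-(arg S) : ℝ) : Torus) = exp ((-(arg S) : ℝ) * I) := by
        rw [ec, AddCircle.toCircle_apply_mk]; simp [Circle.coe_exp, Complex.exp_neg]
      rw [this]
      nth_rw 2 [← norm_mul_exp_arg_mul_I S]
      rw [mul_left_comm, ← Complex.exp_add]
      simp
    let u : Torus → ℝ := fun y => 1 - (ec (n • y + a)).re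
    have huc : Continuous u := by have := continuous_ec; fun_prop
    have hu0 : ∀ y, 0 ≤ u y := fun y => by
      have := (re_le_norm (ec (n • y + a))).trans (norm_ec _).le
      simp only [u]; linarith
    have h1 : ∫ y, u y ∂ν = 1 - ‖S‖ := by
      have hi : Integrable (fun y => (ec (n • y + a)).re) ν := by
        apply cintR; have := continuous_ec; fun_prop
      rw [integral_sub (integrable_const _) hi]
      congr 1
      · simp
      · have h2 : ∀ y, (ec (n • y + a)) = ec a * ec y ^ n := fun y => by
          rw [ec_add, ec_zsmul, mul_comm (ec y ^ n)]
        have h3 : ∫ y, ec (n • y + a) ∂ν = ‖S‖ := by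
          simp_rw [h2]; rw [integral_const_mul, ← hS, ha]
        have h4 := integral_re (𝕜 := ℂ) (f := fun y => ec (n • y + a)) (μ := ν) (by
          apply cint; have := continuous_ec; fun_prop)
        rw [h3] at h4
        simpa using h4
    let E : Set Torus := {y | δ ≤ u y}
    have hE : MeasurableSet E := measurableSet_le measurable_const huc.measurable
    have h5 : δ * ν.real E ≤ ∫ y, u y ∂ν :=
      mul_meas_ge_le_integral_of_nonneg (Filter.Eventually.of_forall hu0) (cintR huc ν) δ
    have h6 : ν (G \ E) ≤ ν G / 2 := by
      have h7 : ν (G \ E) = ν.restrict G Eᶜ := by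
        rw [Measure.restrict_apply hE.compl, Set.inter_comm]; rfl
      have h8 : hh Eᶜ = hh {y | 1 - (ec y).re < δ} := by
        have mp1 : MeasurePreserving (fun y : Torus => n • y) hh hh := by
          constructor
          · fun_prop
          · exact (Measure.measurePreserving_zsmul hh hn).map_eq
        have mp2 : MeasurePreserving (fun y : Torus => y + a) hh hh := measurePreserving_add_right _ _
        have := (mp2.comp mp1).measure_preimage (s := {y | 1 - (ec y).re < δ})
          (measurableSet_lt (by have := continuous_ec; fun_prop) measurable_const).nullMeasurableSet
        rw [← this]
        congr 1
        ext y
        simp [E, u]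
      rw [h7]
      refine (hle Eᶜ).trans ?_
      rw [Measure.smul_apply, h8, smul_eq_mul]
      calc (c : ENNReal) * hh {y | 1 - (ec y).re < δ} ≤ (c + 1) * (ν G / 2 / (c + 1)) := by
            gcongr
            exact le_self_add
        _ = ν G / 2 := ENNReal.mul_div_cancel (by simp) (by finiteness)
    have h9 : ν.real G / 2 ≤ ν.real E := by
      have h10 : ν.real (G \ E) ≤ ν.real G / 2 := by
        have := ENNReal.toReal_mono (by finiteness) h6
        simpa [Measure.real] using this
      have h11 : ν.real G ≤ ν.real E + ν.real (G \ E) := by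
        refine (measureReal_mono (s₂ := E ∪ (G \ E)) ?_).trans (measureReal_union_le _ _)
        intro x hx
        by_cases h : x ∈ E
        · exact Or.inl h
        · exact Or.inr ⟨hx, h⟩
      linarith
    have : δ * (ν.real G / 2) ≤ δ * ν.real E := by gcongr
    linarith
  refine ⟨max 0 (1 - δ * (ν.real G / 2)), le_max_left _ _, ?_, fun n hn => (hmain n hn).trans (le_max_right _ _)⟩
  apply max_lt one_pos
  have : 0 < δ * (ν.real G / 2) := by positivity
  linarith

end

noncomputable section
set_option linter.unusedSectionVars false

def Nop (ν : Measure Torus) (ζ : Torus) (g : Torus → ℝ) (x : Torus) : ℝ := ∫ θ, g (x + ζ + θ) ∂ν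

def Uop (r t : ℝ) (f : Torus → ℝ) (y : Torus) : ℝ := sp r t y * f (mob r y)

def fs (r t : ℝ) (ν : Measure Torus) (ζ : Torus) : ℕ → Torus → ℝ
  | 0 => fun _ => 1
  | n+1 => Nop ν ζ (Uop r t (fs r t ν ζ n))

lemma parseval (g : Torus → ℝ) (hg : Continuous g) :
    HasSum (fun n : ℤ => ‖fourierCoeff (fun y : Torus => (g y : ℂ)) n‖ ^ 2) (∫ y, g y ^ 2 ∂hh) := by
  let G : C(Torus, ℂ) := ⟨fun y => (g y : ℂ), by fun_prop⟩
  have hco : ⇑(ContinuousMap.toLp (E := ℂ) 2 hh ℂ G) =ᵐ[hh] G := ContinuousMap.coeFn_toLp hh G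
  have h := hasSum_sq_fourierCoeff (ContinuousMap.toLp (E := ℂ) 2 hh ℂ G)
  have h1 : fourierCoeff (ContinuousMap.toLp (E := ℂ) 2 hh ℂ G) = fourierCoeff G :=
    fourierCoeff_congr_ae hco
  rw [h1] at h
  have h2 : ∫ y, g y ^ 2 ∂hh = ∫ y, ‖ContinuousMap.toLp (E := ℂ) 2 hh ℂ G y‖ ^ 2 ∂hh := ?_
  · rw [h2]; exact h
  apply integral_congr_ae
  filter_upwards [hco] with y hy
  rw [hy]
  simp [G]

lemma Nop_cont (ν : Measure Torus) [IsProbabilityMeasure ν] (ζ : Torus) (g : Torus → ℝ) (hg : Continuous g) :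
    Continuous (Nop ν ζ g) := by
  obtain ⟨B, hB⟩ := isCompact_univ.exists_bound_of_continuousOn hg.continuousOn
  apply continuous_of_dominated (bound := fun _ => B)
  · intro x; exact (by fun_prop : Continuous fun θ => g (x + ζ + θ)).aestronglyMeasurable
  · intro x; exact Filter.Eventually.of_forall fun θ => hB _ (Set.mem_univ _)
  · exact integrable_const _
  · exact Filter.Eventually.of_forall fun θ => by fun_prop

lemma Nop_coeff (ν : Measure Torus) [IsProbabilityMeasure ν] (ζ : Torus) (g : Torus → ℝ) (hg : Continuous g)
    (n : ℤ) : fourierCoeff (fun y : Torus => (Nop ν ζ g y : ℂ)) n =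
      (∫ θ, ec θ ^ n ∂ν) * (ec ζ ^ n * fourierCoeff (fun y : Torus => (g y : ℂ)) n) := by
  have hec := continuous_ec
  have hez := ecz_cont (-n)
  simp only [fourierCoeff, Nop, fourier_eq_ec, smul_eq_mul]
  have h1 : ∀ x : Torus, ec x ^ (-n) * ((∫ θ, g (x + ζ + θ) ∂ν : ℝ) : ℂ) =
      ∫ θ, ec x ^ (-n) * (g (x + ζ + θ) : ℂ) ∂ν := by
    intro x
    rw [integral_const_mul, integral_complex_ofReal]
  simp_rw [h1]
  rw [integral_integral_swap]
  · rw [← integral_mul_const]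
    congr 1; ext θ
    have h2 := integral_add_right_eq_self (μ := hh) (fun x => ec (x - (ζ + θ)) ^ (-n) * (g x : ℂ)) (ζ + θ)
    simp only [add_sub_cancel_right] at h2
    simp only [← add_assoc] at h2
    rw [h2, ← mul_assoc, ← integral_const_mul]
    congr 1; ext x
    rw [ec_sub, ec_add, mul_zpow, inv_zpow, ← zpow_neg, neg_neg, mul_zpow]
    ring
  · have hc : Continuous fun p : Torus × Torus => ec p.1 ^ (-n) * (g (p.1 + ζ + p.2) : ℂ) := by
      have : Continuous fun p : Torus × Torus => ec p.1 ^ (-n) := hez.comp continuous_fst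
      fun_prop
    exact hc.integrable_of_hasCompactSupport (HasCompactSupport.of_compactSpace _)

lemma coeff_zero (g : Torus → ℝ) : fourierCoeff (fun y : Torus => (g y : ℂ)) 0 = ((∫ y, g y ∂hh : ℝ) : ℂ) := by
  simp only [fourierCoeff, fourier_eq_ec, neg_zero, zpow_zero, one_smul]
  exact integral_complex_ofReal

lemma Nop_mean (ν : Measure Torus) [IsProbabilityMeasure ν] (ζ : Torus) (g : Torus → ℝ) (hg : Continuous g) :
    ∫ x, Nop ν ζ g x ∂hh = ∫ y, g y ∂hh := by
  have := Nop_coeff ν ζ g hg 0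
  rw [coeff_zero, coeff_zero] at this
  simp at this
  exact_mod_cast this

lemma Nop_sq (ν : Measure Torus) [IsProbabilityMeasure ν] (ζ : Torus) (g : Torus → ℝ) (hg : Continuous g)
    (q : ℝ) (_hq0 : 0 ≤ q) (hq : ∀ n : ℤ, n ≠ 0 → ‖∫ y, ec y ^ n ∂ν‖ ≤ q) :
    ∫ x, Nop ν ζ g x ^ 2 ∂hh ≤ (∫ y, g y ∂hh)^2 + q^2 * (∫ y, g y ^ 2 ∂hh - (∫ y, g y ∂hh)^2) := by
  have h1 := parseval _ (Nop_cont ν ζ g hg)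
  have h2 := (parseval g hg).mul_left (q^2)
  have h3 := hasSum_ite_eq (0:ℤ) ((1 - q^2) * (∫ y, g y ∂hh)^2)
  have h4 := h2.add h3
  refine (hasSum_le ?_ h1 h4).trans (le_of_eq (by ring))
  intro n
  split_ifs with hn
  · subst hn
    rw [coeff_zero, coeff_zero, Nop_mean ν ζ g hg]
    simp only [norm_real, Real.norm_eq_abs, sq_abs]
    exact le_of_eq (by ring)
  · rw [Nop_coeff ν ζ g hg, norm_mul, norm_mul, norm_zpow, norm_ec, one_zpow, one_mul, mul_pow, add_zero]
    gcongr
    exact hq n hn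

lemma sq_int_le (u : Torus → ℝ) (hu : Continuous u) : (∫ y, u y ∂hh)^2 ≤ ∫ y, u y ^ 2 ∂hh := by
  have h := integral_nonneg (μ := hh) (f := fun y => (u y - ∫ z, u z ∂hh)^2) (fun y => sq_nonneg _)
  set m := ∫ z, u z ∂hh with hm
  have e : ∀ y, (u y - m)^2 = u y ^ 2 - (2 * m) * u y + m^2 := fun y => by ring
  simp_rw [e] at h
  rw [integral_add, integral_sub, integral_const_mul, ← hm] at h
  · simp at h; nlinarith
  · exact cintR (by fun_prop) _
  · exact cintR (by fun_prop) _
  · exact cintR (by fun_prop) _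
  · exact integrable_const _

lemma real_contr (Q κ : ℝ) (hQ0 : 0 ≤ Q) (hQ1 : Q < 1) (hκ0 : 0 ≤ κ) (hκ1 : κ < 1) :
    ∃ ρ, 0 < ρ ∧ ρ < 1 ∧ ∀ A V V' D A' : ℝ, A^2 ≤ V → V' ≤ A^2 + Q * (V - A^2) → D^2 ≤ V' - A^2 →
      A' = κ * A + D → A'^2 ≤ V' → A'^2 + Q * (V' - A'^2) ≤ ρ * V := by
  set w := (1 - Q) * (1 - κ) / 2 with hw
  have hQ' : 0 < 1 - Q := by linarith
  have hκ' : 0 < 1 - κ := by linarith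
  have hw0 : 0 < w := by positivity
  have hw1 : w ≤ 1 := by rw [hw]; nlinarith
  set M := max (1 - w * (1 - κ)) ((1 + Q) / 2) with hM
  have hM1 : M < 1 := max_lt (by nlinarith) (by linarith)
  have hM0 : 0 < M := lt_of_lt_of_le (by linarith : 0 < (1+Q)/2) (le_max_right _ _)
  refine ⟨Q + (1 - Q) * M, by nlinarith [mul_pos hQ' hM0], by nlinarith, ?_⟩
  intro A V V' D A' h1 h2 h3 h4 h5
  set B := V - A^2 with hB
  have hB0 : 0 ≤ B := by linarith
  have hA2 : 0 ≤ A^2 := sq_nonneg A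
  have hD : D^2 ≤ Q * B := by linarith
  have h6 : A'^2 * (1 - κ) ≤ κ * (1 - κ) * A^2 + D^2 := by
    rw [h4]
    have : κ * (1 - κ) * A^2 + D^2 - (κ * A + D)^2 * (1 - κ) = κ * ((1-κ)*A - D)^2 := by ring
    nlinarith [mul_nonneg hκ0 (sq_nonneg ((1-κ)*A - D))]
  have h7 : w * A'^2 ≤ w * (κ * A^2) + (1 - Q)/2 * (Q * B) := by
    have : (1-Q)/2 * (A'^2 * (1 - κ)) ≤ (1-Q)/2 * (κ * (1 - κ) * A^2 + Q * B) := by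
      gcongr; linarith
    calc w * A'^2 = (1-Q)/2 * (A'^2 * (1 - κ)) := by rw [hw]; ring
      _ ≤ _ := this
      _ = _ := by rw [hw]; ring
  have h8 : (1 - w) * A'^2 ≤ (1 - w) * (A^2 + Q * B) := by
    apply mul_le_mul_of_nonneg_left _ (by linarith)
    linarith
  have h9 : A'^2 ≤ (1 - w * (1 - κ)) * A^2 + ((1+Q)/2) * B := by
    have h10 : (1-Q)/2 * (Q*B) + (1-w) * (Q * B) ≤ ((1+Q)/2) * B := by
      have : Q * B * (1 - w) ≤ Q * B := by nlinarith [mul_nonneg hQ0 hB0]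
      have : (1-Q)/2 * (Q*B) ≤ (1-Q)/2 * B := by gcongr; nlinarith
      nlinarith
    nlinarith
  have h11 : A'^2 ≤ M * V := by
    have a1 : (1 - w * (1 - κ)) * A^2 ≤ M * A^2 := by gcongr; exact le_max_left _ _
    have a2 : ((1+Q)/2) * B ≤ M * B := by gcongr; exact le_max_right _ _
    have : M * V = M * A^2 + M * B := by rw [hB]; ring
    linarith
  have h12 : V' ≤ V := by nlinarith
  calc A'^2 + Q * (V' - A'^2) = Q * V' + (1 - Q) * A'^2 := by ring
    _ ≤ Q * V + (1 - Q) * (M * V) := by gcongr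
    _ = _ := by ring

section
variable {r t : ℝ} (hr0 : 0 < r) (hr1 : r < 1) (ht0 : 0 < t) (ht : t ^ 2 = 1 - r ^ 2)
include hr0 hr1 ht0 ht

lemma Uop_cont (f : Torus → ℝ) (hf : Continuous f) : Continuous (Uop r t f) :=
  (sp_cont hr0 hr1 ht0 ht).mul (hf.comp (mob_cont hr0 hr1 ht0 ht))

lemma Uop_sq (f : Torus → ℝ) (hf : Continuous f) : ∫ y, Uop r t f y ^ 2 ∂hh = ∫ y, f y ^ 2 ∂hh := by
  rw [← int_mob hr0 hr1 ht0 ht (fun y => f y ^ 2) (by fun_prop)]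
  congr 1; ext y; rw [Uop]; ring

lemma kappa : ∫ y, sp r t y ∂hh < 1 := by
  have hc := sp_cont hr0 hr1 ht0 ht
  have h1 : ∫ y, sp r t y ^ 2 ∂hh = 1 := by
    have := int_mob hr0 hr1 ht0 ht (fun _ => 1) (by fun_prop)
    simpa using this
  have hcc : Continuous fun y => (sp r t y - 1)^2 := by fun_prop
  have h2 : 0 < ∫ y, (sp r t y - 1)^2 ∂hh := by
    apply Continuous.integral_pos_of_hasCompactSupport_nonneg_nonzero (x := 0) hcc
      (HasCompactSupport.of_compactSpace _) (fun y => sq_nonneg _)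
    have : sp r t 0 = t / (1 - r) := by
      rw [sp, wf, ec_zero, mul_one]
      congr 1
      have : (1 : ℂ) - r = ((1 - r : ℝ) : ℂ) := by push_cast; rfl
      rw [this, norm_real, Real.norm_eq_abs, abs_of_pos (by linarith)]
    rw [this]
    intro h
    have h3 : t / (1-r) = 1 := by
      have := pow_eq_zero_iff (two_ne_zero) |>.1 h
      linarith
    rw [div_eq_one_iff_eq (by linarith)] at h3
    rw [h3] at ht
    nlinarith
  have e : ∀ y, (sp r t y - 1)^2 = sp r t y ^ 2 - 2 * sp r t y + 1 := fun y => by ring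
  simp_rw [e] at h2
  rw [integral_add, integral_sub, integral_const_mul, h1] at h2
  · simp at h2; linarith
  · exact cintR (by fun_prop) _
  · exact cintR (by fun_prop) _
  · exact cintR (by fun_prop) _
  · exact integrable_const _

lemma fs_cont (ν : Measure Torus) [IsProbabilityMeasure ν] (ζ : Torus) (n : ℕ) : Continuous (fs r t ν ζ n) := by
  induction n with
  | zero => exact continuous_const
  | succ n ih => exact Nop_cont ν ζ _ (Uop_cont hr0 hr1 ht0 ht _ ih)

lemma fs_nonneg (ν : Measure Torus) [IsProbabilityMeasure ν] (ζ : Torus) (n : ℕ) (x : Torus) :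
    0 ≤ fs r t ν ζ n x := by
  induction n generalizing x with
  | zero => simp [fs]
  | succ n ih => 
    exact integral_nonneg fun θ => mul_nonneg (sp_pos hr0 hr1 ht0 ht _).le (ih _)

lemma two_step (ν : Measure Torus) [IsProbabilityMeasure ν]
    (q : ℝ) (hq0 : 0 ≤ q) (hq1 : q < 1) (hq : ∀ n : ℤ, n ≠ 0 → ‖∫ y, ec y ^ n ∂ν‖ ≤ q) :
    ∃ ρ, 0 < ρ ∧ ρ < 1 ∧ ∀ ζ n, ∫ x, fs r t ν ζ (n+2) x ^ 2 ∂hh ≤ ρ * ∫ x, fs r t ν ζ n x ^ 2 ∂hh := by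
  obtain ⟨ρ, hρ0, hρ1, hρ⟩ := real_contr (q^2) (∫ y, sp r t y ∂hh) (by positivity) (by nlinarith)
    (integral_nonneg fun y => (sp_pos hr0 hr1 ht0 ht y).le) (kappa hr0 hr1 ht0 ht)
  refine ⟨ρ, hρ0, hρ1, fun ζ n => ?_⟩
  have hsc := sp_cont hr0 hr1 ht0 ht
  have hmc := mob_cont hr0 hr1 ht0 ht
  set f := fs r t ν ζ n with hf
  have hfc : Continuous f := fs_cont hr0 hr1 ht0 ht ν ζ n
  set g := Uop r t f with hg
  have hgc : Continuous g := Uop_cont hr0 hr1 ht0 ht f hfc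
  set f' := Nop ν ζ g with hf'
  have hfc' : Continuous f' := Nop_cont ν ζ g hgc
  set g' := Uop r t f' with hg'
  have hgc' : Continuous g' := Uop_cont hr0 hr1 ht0 ht f' hfc'
  have e : fs r t ν ζ (n+2) = Nop ν ζ g' := rfl
  rw [e]
  set A := ∫ y, g y ∂hh with hA
  refine (Nop_sq ν ζ g' hgc' q hq0 hq).trans ?_
  rw [← Uop_sq hr0 hr1 ht0 ht f hfc]
  refine hρ A _ _ (∫ y, Uop r t (fun x => f' x - A) y ∂hh) _ (sq_int_le g hgc) ?_ ?_ ?_ (sq_int_le g' hgc')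
  · rw [Uop_sq hr0 hr1 ht0 ht f' hfc']
    exact Nop_sq ν ζ g hgc q hq0 hq
  · refine (sq_int_le _ (Uop_cont hr0 hr1 ht0 ht _ (by fun_prop))).trans (le_of_eq ?_)
    rw [Uop_sq hr0 hr1 ht0 ht _ (by fun_prop), Uop_sq hr0 hr1 ht0 ht f' hfc']
    have e : ∀ y, (f' y - A)^2 = f' y ^ 2 - (2 * A) * f' y + A^2 := fun y => by ring
    simp_rw [e]
    have hm : ∫ y, f' y ∂hh = A := Nop_mean ν ζ g hgc
    rw [integral_add, integral_sub, integral_const_mul, hm]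
    · simp; ring
    · exact cintR (by fun_prop) _
    · exact cintR (by fun_prop) _
    · exact cintR (by fun_prop) _
    · exact integrable_const _
  · rw [← integral_mul_const, ← integral_add]
    · congr 1; ext y; simp only [hg', Uop]; ring
    · exact cintR (by fun_prop) _
    · exact cintR (Uop_cont hr0 hr1 ht0 ht _ (by fun_prop)) _

lemma decay (ν : Measure Torus) [IsProbabilityMeasure ν] (G : Set Torus) (c : NNReal)
    (hνG : 0 < ν G) (hle : ν.restrict G ≤ (c : ENNReal) • hh) :
    ∃ σ C : ℝ, 0 < σ ∧ σ < 1 ∧ 0 ≤ C ∧ ∀ ζ n, ∫ y, Uop r t (fs r t ν ζ n) y ∂hh ≤ C * σ ^ n := by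
  obtain ⟨q, hq0, hq1, hq⟩ := fourier_gap ν G c hνG hle
  obtain ⟨ρ, hρ0, hρ1, hρ⟩ := two_step hr0 hr1 ht0 ht ν q hq0 hq1 hq
  set σ := Real.sqrt (Real.sqrt ρ) with hσ
  have hs : σ^2 = Real.sqrt ρ := Real.sq_sqrt (Real.sqrt_nonneg _)
  have hσ4 : σ^4 = ρ := by
    rw [show σ^4 = (σ^2)^2 by ring, hs, Real.sq_sqrt hρ0.le]
  have hσ0 : 0 < σ := Real.sqrt_pos.2 (Real.sqrt_pos.2 hρ0)
  have hσ1 : σ < 1 := by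
    by_contra h
    push Not at h
    have : 1 ≤ σ^4 := one_le_pow₀ h
    linarith
  have h0 : ∀ ζ n, ∫ x, fs r t ν ζ n x ^ 2 ∂hh ≤ (σ⁻¹ * σ^n)^2 := by
    intro ζ n
    induction n using Nat.twoStepInduction with
    | zero =>
      simp [fs]
      rw [← inv_pow]
      exact one_le_pow₀ (one_le_inv_iff₀.2 ⟨hσ0, hσ1.le⟩)
    | one => 
      have h1 := Nop_sq ν ζ (Uop r t (fs r t ν ζ 0)) (Uop_cont hr0 hr1 ht0 ht _ (fs_cont hr0 hr1 ht0 ht ν ζ 0)) q hq0 hq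
      rw [Uop_sq hr0 hr1 ht0 ht _ (fs_cont hr0 hr1 ht0 ht ν ζ 0)] at h1
      have h2 := sq_int_le (Uop r t (fs r t ν ζ 0)) (Uop_cont hr0 hr1 ht0 ht _ (fs_cont hr0 hr1 ht0 ht ν ζ 0))
      rw [Uop_sq hr0 hr1 ht0 ht _ (fs_cont hr0 hr1 ht0 ht ν ζ 0)] at h2
      have h3 : ∫ x, fs r t ν ζ 0 x ^ 2 ∂hh = 1 := by simp [fs]
      rw [h3] at h1 h2
      rw [pow_one, inv_mul_cancel₀ hσ0.ne', one_pow]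
      change ∫ x, Nop ν ζ (Uop r t (fs r t ν ζ 0)) x ^ 2 ∂hh ≤ 1
      refine h1.trans ?_
      set z := (∫ (y : Torus), Uop r t (fs r t ν ζ 0) y ∂hh) ^ 2
      have hqq : q^2 ≤ 1 := by nlinarith
      nlinarith
    | more n ih _ =>
      refine (hρ ζ n).trans ?_
      calc ρ * ∫ x, fs r t ν ζ n x ^ 2 ∂hh ≤ ρ * (σ⁻¹ * σ^n)^2 := by gcongr
        _ = _ := by rw [← hσ4]; ring
  refine ⟨σ, σ⁻¹, hσ0, hσ1, by positivity, fun ζ n => ?_⟩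
  apply le_of_sq_le_sq _ (by positivity) |> fun h => h
  refine (sq_int_le _ (Uop_cont hr0 hr1 ht0 ht _ (fs_cont hr0 hr1 ht0 ht ν ζ n))).trans ?_
  rw [Uop_sq hr0 hr1 ht0 ht _ (fs_cont hr0 hr1 ht0 ht ν ζ n)]
  exact h0 ζ n

end
end

noncomputable section
set_option linter.unusedSectionVars false

def IID (ν : Measure Torus) (ℙ : Measure (ℕ → Torus)) : Prop :=
  ∀ (s : Finset ℕ) (A : ℕ → Set Torus), (∀ k, MeasurableSet (A k)) →
      ℙ {ω | ∀ k ∈ s, ω k ∈ A k} = ∏ k ∈ s, ν (A k)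

def tcons (p : Torus × (ℕ → Torus)) : ℕ → Torus
  | 0 => p.1
  | n+1 => p.2 n

lemma tcons_meas : Measurable tcons := by
  rw [measurable_pi_iff]
  intro n
  rcases n with _ | n
  · exact measurable_fst
  · exact (measurable_pi_apply n).comp measurable_snd

lemma tcons_map (ν : Measure Torus) [IsProbabilityMeasure ν] (ℙ : Measure (ℕ → Torus))
    [IsProbabilityMeasure ℙ] (hiid : IID ν ℙ) : (ν.prod ℙ).map tcons = ℙ := by
  have h1 : ℙ = Measure.infinitePi (fun _ : ℕ => ν) := by
    apply Measure.eq_infinitePi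
    intro s A hA
    exact hiid s A hA
  have h2 : (ν.prod ℙ).map tcons = Measure.infinitePi (fun _ : ℕ => ν) := by
    apply Measure.eq_infinitePi
    intro s A hA
    rw [Measure.map_apply tcons_meas (MeasurableSet.pi s.countable_toSet fun i _ => hA i)]
    obtain ⟨n, hn⟩ := s.exists_nat_subset_range
    have hn' : s ⊆ Finset.range (n+1) := hn.trans (Finset.range_mono (Nat.le_succ n))
    let B : ℕ → Set Torus := fun k => if k ∈ s then A k else Set.univ
    have hB : ∀ k, MeasurableSet (B k) := by
      intro k; simp only [B]; split_ifs
      · exact hA k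
      · exact MeasurableSet.univ
    have h3 : tcons ⁻¹' (Set.pi s A) = (B 0) ×ˢ {ω | ∀ k ∈ Finset.range n, ω k ∈ B (k+1)} := by
      ext ⟨θ, ω⟩
      simp only [Set.mem_preimage, Set.mem_pi, Set.mem_prod, Set.mem_ofPred_eq, Finset.mem_range, B]
      constructor
      · intro h
        refine ⟨?_, fun k hk => ?_⟩
        · split_ifs with h0
          · exact h 0 h0
          · trivial
        · split_ifs with h0
          · exact h (k+1) h0
          · trivial
      · rintro ⟨h0, h1⟩ k hk
        rcases k with _ | k
        · rw [if_pos (by exact hk)] at h0; exact h0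
        · have := h1 k (by have := hn' hk; simp at this; omega)
          rw [if_pos (by exact hk)] at this; exact this
    rw [h3, Measure.prod_prod, hiid (Finset.range n) (fun k => B (k+1)) (fun k => hB _), mul_comm (ν (B 0)),
      ← Finset.prod_range_succ' (fun k => ν (B k)) n, ← Finset.prod_subset hn']
    · apply Finset.prod_congr rfl
      intro k hk; simp [B, hk]
    · intro k _ hk; simp [B, hk]
  rw [h2, ← h1]

lemma exp_step (ν : Measure Torus) [IsProbabilityMeasure ν] (ℙ : Measure (ℕ → Torus))
    [IsProbabilityMeasure ℙ] (hiid : IID ν ℙ) (F : (ℕ → Torus) → ENNReal) (hF : Measurable F) :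
    ∫⁻ ω, F ω ∂ℙ = ∫⁻ θ, ∫⁻ ω, F (tcons (θ, ω)) ∂ℙ ∂ν := by
  conv_lhs => rw [← tcons_map ν ℙ hiid]
  rw [lintegral_map hF tcons_meas]
  exact lintegral_prod _ (hF.comp tcons_meas).aemeasurable

def Pr (r : ℝ) (ζ x : Torus) (W : ℕ → Torus → Torus → ENNReal) (n : ℕ) (ω : ℕ → Torus) : ENNReal :=
  ∏ i ∈ Finset.range n, W i (ω i) (xs r ζ x ω i + ζ + ω i)

def Val (r : ℝ) (ν : Measure Torus) (ζ : Torus) : ℕ → (ℕ → Torus → Torus → ENNReal) → Torus → ENNReal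
  | 0, _, _ => 1
  | n+1, W, x => ∫⁻ θ, W 0 θ (x + ζ + θ) * Val r ν ζ n (fun i => W (i+1)) (mob r (x + ζ + θ)) ∂ν

section
variable {r t : ℝ} (hr0 : 0 < r) (hr1 : r < 1) (ht0 : 0 < t) (ht : t ^ 2 = 1 - r ^ 2)
include hr0 hr1 ht0 ht

lemma xs_meas (n : ℕ) : Measurable fun q : Torus × Torus × (ℕ → Torus) => xs r q.1 q.2.1 q.2.2 n := 
  (xs_cont hr0 hr1 ht0 ht n).measurable

lemma Pr_meas (W : ℕ → Torus → Torus → ENNReal) (hW : ∀ i, Measurable (fun p : Torus × Torus => W i p.1 p.2))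
    (n : ℕ) : Measurable fun q : Torus × Torus × (ℕ → Torus) => Pr r q.1 q.2.1 W n q.2.2 := by
  unfold Pr
  apply Finset.measurable_prod
  intro i _
  have h1 := xs_meas hr0 hr1 ht0 ht i
  have h2 : Measurable fun q : Torus × Torus × (ℕ → Torus) => q.2.2 i := by fun_prop
  exact (hW i).comp (h2.prodMk (by fun_prop))

lemma Val_eq (ν : Measure Torus) [IsProbabilityMeasure ν] (ℙ : Measure (ℕ → Torus))
    [IsProbabilityMeasure ℙ] (hiid : IID ν ℙ) (ζ : Torus) (n : ℕ) :
    ∀ (x : Torus) (W : ℕ → Torus → Torus → ENNReal) 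
    (hW : ∀ i, Measurable (fun p : Torus × Torus => W i p.1 p.2)),
    ∫⁻ ω, Pr r ζ x W n ω ∂ℙ = Val r ν ζ n W x := by
  induction n with
  | zero => intro x W hW; simp [Pr, Val]
  | succ n ih =>
    intro x W hW
    have hm : ∀ (x : Torus) (W : ℕ → Torus → Torus → ENNReal) 
      (_ : ∀ i, Measurable (fun p : Torus × Torus => W i p.1 p.2)) (n : ℕ), Measurable (Pr r ζ x W n) := by
      intro x W hW n
      exact (Pr_meas hr0 hr1 ht0 ht W hW n).comp (g := fun q : Torus × Torus × (ℕ → Torus) => Pr r q.1 q.2.1 W n q.2.2) 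
        (f := fun ω => (ζ, x, ω)) (by fun_prop)
    rw [exp_step ν ℙ hiid _ (hm x W hW (n+1)), Val]
    congr 1; ext θ
    rw [← ih _ _ (fun i => hW (i+1)), ← lintegral_const_mul _ (hm _ _ (fun i => hW (i+1)) _)]
    congr 1; ext ω
    rw [Pr, Finset.prod_range_succ', mul_comm]
    congr 1
    rw [Pr]
    apply Finset.prod_congr rfl
    intro i _
    rw [xs_shift]
    rfl

lemma Val_meas (ν : Measure Torus) [IsProbabilityMeasure ν] (ζ : Torus) (n : ℕ) :
    ∀ (W : ℕ → Torus → Torus → ENNReal) 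
    (_ : ∀ i, Measurable (fun p : Torus × Torus => W i p.1 p.2)), Measurable (Val r ν ζ n W) := by
  induction n with
  | zero => intro W _; exact measurable_const
  | succ n ih =>
    intro W hW
    have hmm := (mob_cont hr0 hr1 ht0 ht).measurable
    have h := ih _ (fun i => hW (i+1))
    have : Measurable fun p : Torus × Torus => W 0 p.2 (p.1 + ζ + p.2) * 
        Val r ν ζ n (fun i => W (i+1)) (mob r (p.1 + ζ + p.2)) := by
      apply Measurable.mul
      · exact (hW 0).comp (measurable_snd.prodMk (by fun_prop))
      · exact h.comp (hmm.comp (by fun_prop))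
    exact this.lintegral_prod_right'

lemma Val_const (ν : Measure Torus) [IsProbabilityMeasure ν] (ζ : Torus) (K B : ENNReal) (n a : ℕ) :
    ∀ (W : ℕ → Torus → Torus → ENNReal), (∀ i < a, ∀ θ y, W i θ y ≤ K) →
      (∀ x, Val r ν ζ n (fun i => W (i+a)) x ≤ B) → ∀ x, Val r ν ζ (n+a) W x ≤ K^a * B := by
  induction a with
  | zero => intro W _ h x; simpa using h x
  | succ a ih =>
    intro W hW h x
    change Val r ν ζ (n + a + 1) W x ≤ _
    rw [Val]
    calc _ ≤ ∫⁻ θ, K * (K^a * B) ∂ν := by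
          apply lintegral_mono
          intro θ
          apply mul_le_mul' (hW 0 (Nat.succ_pos a) _ _)
          exact ih (fun i => W (i+1)) (fun i hi => hW (i+1) (by omega)) h _
      _ = _ := by simp [pow_succ']; ring

lemma lint_rot (f : Torus → ENNReal) (a : Torus) : ∫⁻ θ, f (a + θ) ∂hh = ∫⁻ θ, f θ ∂hh :=
  lintegral_add_left_eq_self f a

lemma Val_tail (ν : Measure Torus) [IsProbabilityMeasure ν] (ζ : Torus) (n : ℕ) :
    ∫⁻ x, Val r ν ζ n (fun _ _ y => ENNReal.ofReal (sp r t y ^ 2)) x ∂hh = 1 := by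
  induction n with
  | zero => simp [Val]
  | succ n ih =>
    have hmm := (mob_cont hr0 hr1 ht0 ht).measurable
    have hs := spsq_meas hr0 hr1 ht0 ht
    have h := Val_meas hr0 hr1 ht0 ht ν ζ n (fun _ _ y => ENNReal.ofReal (sp r t y ^ 2)) (fun i => hs.comp measurable_snd)
    simp only [Val]
    rw [lintegral_lintegral_swap]
    · have : ∀ θ, ∫⁻ x, ENNReal.ofReal (sp r t (x + ζ + θ) ^ 2) *
        Val r ν ζ n (fun _ _ y => ENNReal.ofReal (sp r t y ^ 2)) (mob r (x + ζ + θ)) ∂hh = 1 := by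
        intro θ
        have h2 := lintegral_add_right_eq_self (μ := hh) (fun y => ENNReal.ofReal (sp r t y ^ 2) *
          Val r ν ζ n (fun _ _ y => ENNReal.ofReal (sp r t y ^ 2)) (mob r y)) (ζ + θ)
        simp only [← add_assoc] at h2
        rw [h2, lint_mob hr0 hr1 ht0 ht _ h, ih]
      simp_rw [this]
      simp
    · apply Measurable.aemeasurable
      apply Measurable.mul
      · exact hs.comp (by fun_prop)
      · exact h.comp (hmm.comp (by fun_prop))

lemma G_bound (ν : Measure Torus) (G : Set Torus) (hG : MeasurableSet G) (c : NNReal)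
    (hle : ν.restrict G ≤ (c : ENNReal) • hh) (a : Torus) (f : Torus → ENNReal) :
    ∫⁻ θ, G.indicator 1 θ * f (a + θ) ∂ν ≤ c * ∫⁻ y, f y ∂hh := by
  have : ∀ θ, G.indicator 1 θ * f (a + θ) = G.indicator (fun θ => f (a + θ)) θ := by
    intro θ; by_cases h : θ ∈ G <;> simp [h]
  simp_rw [this]
  rw [lintegral_indicator hG, ← lint_rot hr0 hr1 ht0 ht f a]
  refine (lintegral_mono' hle le_rfl).trans ?_
  rw [lintegral_smul_measure, smul_eq_mul]

lemma Val_l (ν : Measure Torus) [IsProbabilityMeasure ν] (ζ : Torus) (n : ℕ) 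
    (G : Set Torus) (hG : MeasurableSet G) (c : NNReal)
    (hle : ν.restrict G ≤ (c : ENNReal) • hh) 
    (W : ℕ → Torus → Torus → ENNReal) (h0 : ∀ θ y, W 0 θ y = G.indicator 1 θ * ENNReal.ofReal (sp r t y ^ 2))
    (h1 : ∀ i θ y, W (i+1) θ y = ENNReal.ofReal (sp r t y ^ 2)) (x : Torus) :
    Val r ν ζ (n+1) W x ≤ c := by
  have e : (fun i => W (i+1)) = (fun _ _ y => ENNReal.ofReal (sp r t y ^ 2)) := by
    funext i θ y; exact h1 i θ y
  have hs := spsq_meas hr0 hr1 ht0 ht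
  have h := Val_meas hr0 hr1 ht0 ht ν ζ n (fun _ _ y => ENNReal.ofReal (sp r t y ^ 2)) (fun i => hs.comp measurable_snd)
  rw [Val, e]
  simp only [h0, mul_assoc]
  refine (G_bound hr0 hr1 ht0 ht ν G hG c hle (x + ζ) (fun y => ENNReal.ofReal (sp r t y ^ 2) *
    Val r ν ζ n (fun _ _ y => ENNReal.ofReal (sp r t y ^ 2)) (mob r y))).trans ?_
  rw [lint_mob hr0 hr1 ht0 ht _ h, Val_tail hr0 hr1 ht0 ht, mul_one]

lemma Val_sp (ν : Measure Torus) [IsProbabilityMeasure ν] (ζ : Torus) (B : ENNReal) (n a : ℕ) :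
    ∀ (W : ℕ → Torus → Torus → ENNReal), (∀ i < a, ∀ θ y, W i θ y = ENNReal.ofReal (sp r t y)) →
      (∀ x, Val r ν ζ n (fun i => W (i+a)) x ≤ B) → ∀ x, Val r ν ζ (n+a) W x ≤ ENNReal.ofReal (fs r t ν ζ a x) * B := by
  induction a with
  | zero => intro W _ h x; simpa [fs] using h x
  | succ a ih =>
    intro W hW h x
    change Val r ν ζ (n + a + 1) W x ≤ _
    have hfc := fs_cont hr0 hr1 ht0 ht ν ζ a
    have hU := Uop_cont hr0 hr1 ht0 ht _ hfc
    rw [Val, fs, Nop, ofReal_integral_eq_lintegral_ofReal (f := fun θ => Uop r t (fs r t ν ζ a) (x+ζ+θ)) (cintR (by fun_prop) _) 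
      (Filter.Eventually.of_forall fun θ => mul_nonneg (sp_pos hr0 hr1 ht0 ht _).le (fs_nonneg hr0 hr1 ht0 ht _ _ _ _)),
      ← lintegral_mul_const _ (by exact (by fun_prop : Continuous fun θ => Uop r t (fs r t ν ζ a) (x+ζ+θ)).measurable.ennreal_ofReal)]
    apply lintegral_mono
    intro θ
    simp only []
    rw [hW 0 (Nat.succ_pos a), Uop, ENNReal.ofReal_mul (sp_pos hr0 hr1 ht0 ht _).le, mul_assoc]
    gcongr
    exact ih (fun i => W (i+1)) (fun i hi => hW (i+1) (by omega)) h _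

lemma Val_j (ν : Measure Torus) [IsProbabilityMeasure ν] (ζ : Torus) (n : ℕ) 
    (G : Set Torus) (hG : MeasurableSet G) (c : NNReal)
    (hle : ν.restrict G ≤ (c : ENNReal) • hh) (B : ENNReal)
    (f : Torus → ℝ) (hf : Continuous f) (hf0 : ∀ x, 0 ≤ f x)
    (W : ℕ → Torus → Torus → ENNReal) (h0 : ∀ θ y, W 0 θ y = G.indicator 1 θ * ENNReal.ofReal (sp r t y))
    (h1 : ∀ x, Val r ν ζ n (fun i => W (i+1)) x ≤ ENNReal.ofReal (f x) * B) (x : Torus) :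
    Val r ν ζ (n+1) W x ≤ c * (ENNReal.ofReal (∫ y, Uop r t f y ∂hh) * B) := by
  have hU := Uop_cont hr0 hr1 ht0 ht _ hf
  rw [Val, ofReal_integral_eq_lintegral_ofReal (f := Uop r t f) (cintR hU _) 
      (Filter.Eventually.of_forall fun θ => mul_nonneg (sp_pos hr0 hr1 ht0 ht _).le (hf0 _)), 
      ← lintegral_mul_const _ hU.measurable.ennreal_ofReal]
  refine le_trans ?_ (G_bound hr0 hr1 ht0 ht ν G hG c hle (x + ζ) (fun y => ENNReal.ofReal (Uop r t f y) * B))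
  apply lintegral_mono
  intro θ
  simp only []
  rw [h0, mul_assoc, Uop, ENNReal.ofReal_mul (sp_pos hr0 hr1 ht0 ht _).le, mul_assoc]
  gcongr
  exact h1 _

def WW (r t : ℝ) (G : Set Torus) (j k l : ℕ) (i : ℕ) (θ y : Torus) : ENNReal :=
  (if i = j ∨ i = l then G.indicator 1 θ else 1) * ENNReal.ofReal (sp r t y ^ (if i < k then 1 else 2))

lemma WW_meas (G : Set Torus) (hG : MeasurableSet G) (j k l i : ℕ) :
    Measurable (fun p : Torus × Torus => WW r t G j k l i p.1 p.2) := by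
  unfold WW
  apply Measurable.mul
  · split_ifs
    · exact (measurable_one.indicator hG).comp measurable_fst
    · exact measurable_const
  · exact (((sp_cont hr0 hr1 ht0 ht).pow _).measurable.comp measurable_snd).ennreal_ofReal

lemma sp_ind (G : Set Torus) (K : NNReal) (hK : ∀ y, sp r t y ≤ K) (e : ℕ) (u : ENNReal) (hu : u ≤ 1) (y : Torus) :
    u * ENNReal.ofReal (sp r t y ^ e) ≤ (K:ENNReal)^e := by
  calc _ ≤ 1 * ENNReal.ofReal ((K:ℝ)^e) := by
        gcongr
        · exact (sp_pos hr0 hr1 ht0 ht y).le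
        · exact hK y
    _ = _ := by rw [one_mul, ENNReal.ofReal_pow (by positivity)]; simp

lemma ind_le (G : Set Torus) (P : Prop) [Decidable P] (θ : Torus) :
    (if P then G.indicator 1 θ else 1 : ENNReal) ≤ 1 := by
  split_ifs
  · exact Set.indicator_le_self' (fun _ _ => bot_le) θ
  · exact le_rfl

lemma main_bound (ν : Measure Torus) [IsProbabilityMeasure ν] (ζ : Torus)
    (G : Set Torus) (hG : MeasurableSet G) (c : NNReal)
    (hle : ν.restrict G ≤ (c : ENNReal) • hh) (K : NNReal) (hK : ∀ y, sp r t y ≤ K)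
    (C σ : ℝ) (hdec : ∀ ζ n, ∫ y, Uop r t (fs r t ν ζ n) y ∂hh ≤ C * σ ^ n) (j a b d : ℕ) (x : Torus) :
    Val r ν ζ (d + 1 + b + a + 1 + j) (WW r t G j (a + 1 + j) (b + a + 1 + j)) x ≤
      (K:ENNReal)^j * (c * (ENNReal.ofReal (C * σ ^ a) * (((K:ENNReal)^2)^b * c))) := by
  apply Val_const hr0 hr1 ht0 ht
  · intro i hi θ y
    rw [WW, if_pos (by omega : i < a + 1 + j), ← pow_one (K:ENNReal)]
    exact sp_ind hr0 hr1 ht0 ht G K hK _ _ (ind_le hr0 hr1 ht0 ht _ _ _) _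
  intro x
  refine (Val_j hr0 hr1 ht0 ht ν ζ (d+1+b+a) G hG c hle (((K:ENNReal)^2)^b * c) (fs r t ν ζ a) 
    (fs_cont hr0 hr1 ht0 ht ν ζ a) (fs_nonneg hr0 hr1 ht0 ht ν ζ a) _ ?_ ?_ x).trans ?_
  · intro θ y
    simp only [WW, zero_add]
    rw [if_pos (by simp), if_pos (by omega), pow_one]
  · apply Val_sp hr0 hr1 ht0 ht
    · intro i hi θ y
      simp only [WW]
      rw [if_neg (by omega), if_pos (by omega), pow_one, one_mul]
    · apply Val_const hr0 hr1 ht0 ht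
      · intro i hi θ y
        simp only [WW]
        rw [if_neg (by omega : ¬ (i + a + 1 + j < a + 1 + j))]
        exact sp_ind hr0 hr1 ht0 ht G K hK _ _ (ind_le hr0 hr1 ht0 ht _ _ _) _
      · apply Val_l hr0 hr1 ht0 ht ν ζ d G hG c hle
        · intro θ y
          simp only [WW]
          rw [if_pos (by omega), if_neg (by omega)]
        · intro i θ y
          simp only [WW]
          rw [if_neg (by omega), if_neg (by omega), one_mul]
  · gcongr
    exact hdec ζ a

omit hr0 hr1 ht0 ht in
lemma prod_aux (s : ℕ → ℝ) (k N : ℕ) (h : k ≤ N) :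
    (∏ i ∈ Finset.range N, s i ^ (if i < k then 1 else 2)) * ∏ i ∈ Finset.range k, s i
      = (∏ i ∈ Finset.range N, s i)^2 := by
  induction N, h using Nat.le_induction with
  | base =>
    rw [pow_two]
    congr 1
    apply Finset.prod_congr rfl
    intro i hi
    rw [if_pos (Finset.mem_range.1 hi), pow_one]
  | succ n hn ih =>
    rw [Finset.prod_range_succ, Finset.prod_range_succ _ n, mul_pow, ← ih, if_neg (by omega)]
    ring

lemma Pr_WW (G : Set Torus) (ζ : Torus) (ω : ℕ → Torus) (j k l N : ℕ) (hjN : j < N) (hlN : l < N) (hkN : k ≤ N) (hjl : j < l) :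
    Pr r ζ 0 (WW r t G j k l) N ω = G.indicator 1 (ω j) * G.indicator 1 (ω l) *
      ENNReal.ofReal (‖pz r t (fun m => ∑ i ∈ Finset.range (m+1), ω i) k ζ‖ *
        (‖pz r t (fun m => ∑ i ∈ Finset.range (m+1), ω i) N ζ‖⁻¹) ^ 2) := by
  simp only [Pr, WW]
  rw [Finset.prod_mul_distrib]
  congr 1
  · have h1 : ∀ i, (if i = j ∨ i = l then G.indicator 1 (ω i) else 1 : ENNReal) = 
        (if i = j then G.indicator 1 (ω i) else 1) * (if i = l then G.indicator 1 (ω i) else 1) := by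
      intro i
      by_cases h : i = j
      · have : i ≠ l := by omega
        simp [h, hjl.ne]
      · simp [h]
    simp_rw [h1]
    rw [Finset.prod_mul_distrib, Finset.prod_ite_eq', Finset.prod_ite_eq', if_pos (by simpa using hjN), if_pos (by simpa using hlN)]
  · rw [← ENNReal.ofReal_prod_of_nonneg (fun i _ => pow_nonneg (sp_pos hr0 hr1 ht0 ht _).le _)]
    congr 1
    have hk := norm_pz hr0 hr1 ht0 ht ζ ω k
    have hN := norm_pz hr0 hr1 ht0 ht ζ ω N
    have hne := norm_ne_zero_iff.2 (pz_ne hr0 hr1 ht0 ht (fun m => ∑ i ∈ Finset.range (m+1), ω i) k ζ)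
    have key := prod_aux (fun i => sp r t (xs r ζ 0 ω i + ζ + ω i)) k N hkN
    rw [← hk, ← hN] at key
    rw [← key]
    field_simp

end
end

noncomputable section
set_option linter.unusedSectionVars false

section
variable {r t : ℝ} (hr0 : 0 < r) (hr1 : r < 1) (ht0 : 0 < t) (ht : t ^ 2 = 1 - r ^ 2)

def muN (r t : ℝ) (η : ℕ → Torus) (N : ℕ) : Measure Torus :=
  (hh : Measure Torus).withDensity fun ζ => ENNReal.ofReal ((‖pz r t η N ζ‖⁻¹) ^ 2)

def JJ (r t : ℝ) (η : ℕ → Torus) (N k : ℕ) : ENNReal :=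
  ∫⁻ ζ, ENNReal.ofReal (‖pz r t η k ζ‖ * (‖pz r t η N ζ‖⁻¹) ^ 2) ∂hh

variable (η : ℕ → Torus)
include hr0 hr1 ht0 ht

lemma den_cont (N : ℕ) : Continuous fun ζ => (‖pz r t η N ζ‖⁻¹) ^ 2 := by
  have := (pz_cont r t η N).norm
  exact (this.inv₀ fun ζ => norm_ne_zero_iff.2 (pz_ne hr0 hr1 ht0 ht η N ζ)).pow 2

lemma dz_eq (N : ℕ) (ζ : Torus) : dz r t η N ζ = (((‖pz r t η N ζ‖⁻¹) ^ 2 : ℝ) : ℂ) := by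
  rw [dz, Complex.mul_conj, Complex.normSq_eq_norm_sq]
  push_cast
  rw [inv_pow]

lemma muN_int {E : Type*} [NormedAddCommGroup E] [NormedSpace ℝ E] (N : ℕ) (f : Torus → E) :
    ∫ ζ, f ζ ∂(muN r t η N) = ∫ ζ, ((‖pz r t η N ζ‖⁻¹) ^ 2) • f ζ ∂hh := by
  rw [muN, integral_withDensity_eq_integral_toReal_smul
    ((den_cont hr0 hr1 ht0 ht η N).measurable.ennreal_ofReal) (by simp)]
  congr 1; ext ζ
  rw [ENNReal.toReal_ofReal (by positivity)]

lemma muN_prob (N : ℕ) : IsProbabilityMeasure (muN r t η N) := by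
  constructor
  rw [muN, withDensity_apply _ MeasurableSet.univ, Measure.restrict_univ,
    ← ofReal_integral_eq_lintegral_ofReal (cintR (den_cont hr0 hr1 ht0 ht η N) _)
      (Filter.Eventually.of_forall fun ζ => sq_nonneg _)]
  have h := xz_orth hr0 hr1 ht0 ht η N 0 0 (Nat.zero_le _) (Nat.zero_le _)
  have e : ∀ ζ, (starRingEnd ℂ) (xz r t η 0 ζ) * xz r t η 0 ζ * dz r t η N ζ =
      (((‖pz r t η N ζ‖⁻¹) ^ 2 : ℝ) : ℂ) := by
    intro ζ
    rw [dz_eq hr0 hr1 ht0 ht]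
    simp [xz, pz, pv_zero]
  simp_rw [e] at h
  rw [integral_complex_ofReal, if_pos trivial] at h
  have h' : ∫ ζ, (‖pz r t η N ζ‖⁻¹) ^ 2 ∂hh = 1 := by exact_mod_cast h
  rw [h']; simp

lemma muN_norm (N k : ℕ) : ENNReal.ofReal (∫ ζ, ‖xz r t η k ζ‖ ∂(muN r t η N)) = JJ r t η N k := by
  have hc : Continuous fun ζ => (‖pz r t η N ζ‖⁻¹) ^ 2 * ‖xz r t η k ζ‖ := (den_cont hr0 hr1 ht0 ht η N).mul (xz_cont r t η k).norm
  rw [muN_int hr0 hr1 ht0 ht, JJ]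
  simp only [smul_eq_mul]
  rw [ofReal_integral_eq_lintegral_ofReal (cintR hc _)
      (Filter.Eventually.of_forall fun ζ => mul_nonneg (sq_nonneg _) (norm_nonneg _))]
  congr 1; ext ζ
  rw [norm_xz, mul_comm (‖pz r t η k ζ‖)]

lemma det_part (k0 : ℕ) (S : ℕ → Finset ℕ) (hS : ∀ k, k0 ≤ k → ∀ᶠ N in Filter.atTop, k ∈ S N)
    (B : NNReal) (hB : ∃ᶠ N in Filter.atTop, ∑ k ∈ S N, JJ r t η N k ≤ B) :
    ∃ μ : Measure Torus, IsProbabilityMeasure μ ∧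
      (∀ j k, ∫ ζ, (starRingEnd ℂ) (xz r t η j ζ) * xz r t η k ζ ∂μ = if j = k then 1 else 0) ∧
      Summable fun k => ∫ ζ, ‖xz r t η k ζ‖ ∂μ := by
  have hne : (Filter.atTop ⊓ Filter.principal {N | ∑ k ∈ S N, JJ r t η N k ≤ B}).NeBot :=
    Filter.frequently_mem_iff_neBot.1 hB
  set U := Ultrafilter.of (Filter.atTop ⊓ Filter.principal {N | ∑ k ∈ S N, JJ r t η N k ≤ B}) with hU
  have hUle := Ultrafilter.of_le (Filter.atTop ⊓ Filter.principal {N | ∑ k ∈ S N, JJ r t η N k ≤ B})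
  have hU1 : (U : Filter ℕ) ≤ Filter.atTop := hUle.trans inf_le_left
  have hU2 : ∀ᶠ N in (U : Filter ℕ), ∑ k ∈ S N, JJ r t η N k ≤ B :=
    (hUle.trans inf_le_right) (Filter.mem_principal_self _)
  let m : ℕ → ProbabilityMeasure Torus := fun N => ⟨muN r t η N, muN_prob hr0 hr1 ht0 ht η N⟩
  set μ := (U.map m).lim with hμ
  have hlim : Filter.Tendsto m U (nhds μ) := (U.map m).le_nhds_lim
  refine ⟨μ, μ.2, ?_, ?_⟩
  · intro j k
    have hc : Continuous fun ζ => (starRingEnd ℂ) (xz r t η j ζ) * xz r t η k ζ := by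
      have h1 := xz_cont r t η j
      have h2 := xz_cont r t η k
      fun_prop
    have h := (ProbabilityMeasure.tendsto_iff_forall_integral_rclike_tendsto ℂ).1 hlim
      (BoundedContinuousFunction.mkOfCompact ⟨_, hc⟩)
    simp only [BoundedContinuousFunction.mkOfCompact_apply, ContinuousMap.coe_mk] at h
    refine tendsto_nhds_unique h (tendsto_const_nhds.congr' ?_)
    filter_upwards [hU1 (Filter.eventually_ge_atTop (max j k))] with N hN
    change _ = ∫ ζ, (starRingEnd ℂ) (xz r t η j ζ) * xz r t η k ζ ∂(muN r t η N)
    rw [muN_int hr0 hr1 ht0 ht, ← xz_orth hr0 hr1 ht0 ht η N j k ((le_max_left _ _).trans hN) ((le_max_right _ _).trans hN)]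
    congr 1; ext ζ
    rw [dz_eq hr0 hr1 ht0 ht, Complex.real_smul, mul_comm ((starRingEnd ℂ) (xz r t η j ζ) * xz r t η k ζ)]
  · rw [← summable_nat_add_iff k0]
    apply summable_of_sum_le (c := B)
    · intro k; exact integral_nonneg fun ζ => norm_nonneg _
    intro u
    have h : Filter.Tendsto (fun N => ∑ k ∈ u, ∫ ζ, ‖xz r t η (k + k0) ζ‖ ∂(muN r t η N)) U
        (nhds (∑ k ∈ u, ∫ ζ, ‖xz r t η (k + k0) ζ‖ ∂(μ : Measure Torus))) := by
      apply tendsto_finsetSum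
      intro k _
      have h := (ProbabilityMeasure.tendsto_iff_forall_integral_tendsto).1 hlim
        (BoundedContinuousFunction.mkOfCompact ⟨_, (xz_cont r t η (k+k0)).norm⟩)
      exact h
    refine le_of_tendsto h ?_
    have h3 : ∀ᶠ N in (U : Filter ℕ), ∀ k ∈ u, k + k0 ∈ S N := by
      rw [Filter.eventually_all_finset]
      intro k _
      exact hU1 (hS _ (Nat.le_add_left _ _))
    filter_upwards [hU2, h3] with N h4 h5
    have h6 : ENNReal.ofReal (∑ k ∈ u, ∫ ζ, ‖xz r t η (k + k0) ζ‖ ∂(muN r t η N)) ≤ B := by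
      rw [ENNReal.ofReal_sum_of_nonneg (fun k _ => integral_nonneg fun ζ => norm_nonneg _)]
      simp only [muN_norm hr0 hr1 ht0 ht]
      refine le_trans ?_ h4
      rw [← Finset.sum_image (f := fun k => JJ r t η N k) (g := fun k => k + k0) (s := u) (by intro a _ b _ h; simpa using h)]
      apply Finset.sum_le_sum_of_subset
      intro k hk
      obtain ⟨k', hk', rfl⟩ := Finset.mem_image.1 hk
      exact h5 k' hk'
    rw [← ENNReal.ofReal_coe_nnreal] at h6
    exact (ENNReal.ofReal_le_ofReal_iff B.2).1 h6

end
end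

noncomputable section
set_option linter.unusedSectionVars false

lemma div_tsum (M : ℕ) (hM : 0 < M) (F : ℕ → ENNReal) : ∑' k, F (k / M) = M * ∑' g, F g := by
  have : NeZero M := ⟨hM.ne'⟩
  have h := (Nat.divModEquiv M).tsum_eq (fun p : ℕ × Fin M => F p.1)
  have e : ∀ k, (Nat.divModEquiv M k).1 = k / M := fun k => rfl
  simp only [e] at h
  rw [h, ENNReal.tsum_prod']
  simp [ENNReal.tsum_mul_left]

lemma geo_tsum (q : ℝ) (hq0 : 0 ≤ q) (hq1 : q < 1) :
    ∑' g : ℕ, (g : ENNReal) * (ENNReal.ofReal q) ^ g ≠ ⊤ := by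
  have h := summable_pow_mul_geometric_of_norm_lt_one 1 (r := q) (by rwa [Real.norm_of_nonneg hq0])
  have h2 := h.tsum_ofReal_ne_top
  convert h2 using 3 with g
  rw [ENNReal.ofReal_mul (by positivity), ENNReal.ofReal_pow hq0]
  simp

section
variable {r t : ℝ} (hr0 : 0 < r) (hr1 : r < 1) (ht0 : 0 < t) (ht : t ^ 2 = 1 - r ^ 2)

def YY (r t : ℝ) (G : Set Torus) (N j k l : ℕ) (ω : ℕ → Torus) : ENNReal :=
  ∫⁻ ζ, Pr r ζ 0 (WW r t G j k l) N ω ∂hh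

def XX (r t : ℝ) (G : Set Torus) (M j N : ℕ) (ω : ℕ → Torus) : ENNReal :=
  ∑ k ∈ Finset.range N, if j < k ∧ k + k / M ≤ N then
    ∑ l ∈ Finset.Ico k (k + k / M), YY r t G N j k l ω else 0

include hr0 hr1 ht0 ht

lemma joint_meas (G : Set Torus) (hG : MeasurableSet G) (N j k l : ℕ) :
    Measurable fun p : (ℕ → Torus) × Torus => Pr r p.2 0 (WW r t G j k l) N p.1 := by
  have h := Pr_meas hr0 hr1 ht0 ht (WW r t G j k l) (WW_meas hr0 hr1 ht0 ht G hG j k l) N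
  generalize WW r t G j k l = W at *
  have h2 : Measurable fun p : (ℕ → Torus) × Torus => ((p.2, (0:Torus), p.1) : Torus × Torus × (ℕ → Torus)) :=
    measurable_snd.prodMk (measurable_const.prodMk measurable_fst)
  have h3 := h.comp h2
  unfold Function.comp at h3
  exact h3

lemma YY_meas (G : Set Torus) (hG : MeasurableSet G) (N j k l : ℕ) : Measurable (YY r t G N j k l) :=
  (joint_meas hr0 hr1 ht0 ht G hG N j k l).lintegral_prod_right'

lemma XX_meas (G : Set Torus) (hG : MeasurableSet G) (M j N : ℕ) : Measurable (XX r t G M j N) := by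
  unfold XX
  apply Finset.measurable_fun_sum
  intro k _
  split_ifs
  · apply Finset.measurable_fun_sum
    intro l _
    exact YY_meas hr0 hr1 ht0 ht G hG N j k l
  · exact measurable_const

lemma YY_eq (G : Set Torus) (N j k l : ℕ) (hjk : j < k) (hkl : k ≤ l) (hl : l < N) (ω : ℕ → Torus)
    (hj : ω j ∈ G) (hlG : ω l ∈ G) :
    YY r t G N j k l ω = JJ r t (fun m => ∑ i ∈ Finset.range (m+1), ω i) N k := by
  rw [YY, JJ]
  congr 1; ext ζ
  rw [Pr_WW hr0 hr1 ht0 ht G ζ ω j k l N (by omega) hl (by omega) (by omega)]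
  simp [hj, hlG]

lemma YY_int (ν : Measure Torus) [IsProbabilityMeasure ν] (ℙ : Measure (ℕ → Torus))
    [IsProbabilityMeasure ℙ] (hiid : IID ν ℙ)
    (G : Set Torus) (hG : MeasurableSet G) (c : NNReal)
    (hle : ν.restrict G ≤ (c : ENNReal) • hh) (K : NNReal) (hK : ∀ y, sp r t y ≤ K) (hK1 : 1 ≤ K)
    (C σ : ℝ) (hσ : 0 < σ) (hC : 0 ≤ C) (hdec : ∀ ζ n, ∫ y, Uop r t (fs r t ν ζ n) y ∂hh ≤ C * σ ^ n)
    (N j k l g : ℕ) (hjk : j < k) (hkl : k ≤ l) (hl : l < N) (hg : l < k + g) :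
    ∫⁻ ω, YY r t G N j k l ω ∂ℙ ≤
      ((K:ENNReal)^j * c * c * ENNReal.ofReal C * ((ENNReal.ofReal σ)⁻¹)^(j+1)) *
        ((ENNReal.ofReal σ)^k * ((K:ENNReal)^2)^g) := by
  have hs0 : ENNReal.ofReal σ ≠ 0 := by simpa using hσ
  have hst : ENNReal.ofReal σ ≠ ⊤ := ENNReal.ofReal_ne_top
  unfold YY
  rw [lintegral_lintegral_swap (joint_meas hr0 hr1 ht0 ht G hG N j k l).aemeasurable]
  have hb : ∀ ζ, ∫⁻ ω, Pr r ζ 0 (WW r t G j k l) N ω ∂ℙ ≤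
      ((K:ENNReal)^j * c * c * ENNReal.ofReal C * ((ENNReal.ofReal σ)⁻¹)^(j+1)) *
        ((ENNReal.ofReal σ)^k * ((K:ENNReal)^2)^g) := by
    intro ζ
    rw [Val_eq hr0 hr1 ht0 ht ν ℙ hiid ζ N 0 _ (WW_meas hr0 hr1 ht0 ht G hG j k l)]
    obtain ⟨a, rfl⟩ : ∃ a, k = a + 1 + j := ⟨k - j - 1, by omega⟩
    obtain ⟨b, rfl⟩ : ∃ b, l = b + a + 1 + j := ⟨l - a - 1 - j, by omega⟩
    obtain ⟨d, rfl⟩ : ∃ d, N = d + 1 + b + a + 1 + j := ⟨N - (1 + b + a + 1 + j), by omega⟩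
    refine (main_bound hr0 hr1 ht0 ht ν ζ G hG c hle K hK C σ hdec j a b d 0).trans ?_
    have e1 : (ENNReal.ofReal σ)⁻¹ ^ (j+1) * ENNReal.ofReal σ ^ (a + 1 + j) = ENNReal.ofReal σ ^ a := by
      rw [show a + 1 + j = (j+1) + a by ring, pow_add _ (j+1) a, ← mul_assoc, ← mul_pow,
        ENNReal.inv_mul_cancel hs0 hst, one_pow, one_mul]
    have e2 : ((K:ENNReal)^2)^b ≤ ((K:ENNReal)^2)^g := by
      apply pow_le_pow_right₀
      · exact one_le_pow_of_one_le' (by exact_mod_cast hK1) _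
      · omega
    calc _ = (K:ENNReal)^j * c * c * ENNReal.ofReal C * ENNReal.ofReal σ ^ a * ((K:ENNReal)^2)^b := by
          rw [ENNReal.ofReal_mul hC, ENNReal.ofReal_pow hσ.le]; ring
      _ ≤ (K:ENNReal)^j * c * c * ENNReal.ofReal C * ENNReal.ofReal σ ^ a * ((K:ENNReal)^2)^g := by gcongr
      _ = _ := by rw [← e1]; ring
  calc _ ≤ ∫⁻ ζ, _ ∂hh := lintegral_mono hb
    _ = _ := by simp

lemma XX_int (ν : Measure Torus) [IsProbabilityMeasure ν] (ℙ : Measure (ℕ → Torus))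
    [IsProbabilityMeasure ℙ] (hiid : IID ν ℙ)
    (G : Set Torus) (hG : MeasurableSet G) (c : NNReal)
    (hle : ν.restrict G ≤ (c : ENNReal) • hh) (K : NNReal) (hK : ∀ y, sp r t y ≤ K) (hK1 : 1 ≤ K)
    (C σ : ℝ) (hσ : 0 < σ) (hσ1 : σ < 1) (hC : 0 ≤ C) (hdec : ∀ ζ n, ∫ y, Uop r t (fs r t ν ζ n) y ∂hh ≤ C * σ ^ n)
    (M : ℕ) (hM : 0 < M) (hq : (K:ℝ)^2 * σ^M < 1) (j : ℕ) :
    ∃ B : ENNReal, B ≠ ⊤ ∧ ∀ N, ∫⁻ ω, XX r t G M j N ω ∂ℙ ≤ B := by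
  set D := ((K:ENNReal)^j * c * c * ENNReal.ofReal C * ((ENNReal.ofReal σ)⁻¹)^(j+1)) with hD
  have hDt : D ≠ ⊤ := by
    have hs0 : ENNReal.ofReal σ ≠ 0 := by simpa using hσ
    have : (ENNReal.ofReal σ)⁻¹ ≠ ⊤ := ENNReal.inv_ne_top.2 hs0
    rw [hD]
    finiteness
  set q := (K:ℝ)^2 * σ^M with hqd
  let F : ℕ → ENNReal := fun g => D * ((g : ENNReal) * (ENNReal.ofReal q)^g)
  refine ⟨∑' k, F (k / M), ?_, ?_⟩
  · rw [div_tsum M hM]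
    apply ENNReal.mul_ne_top (by simp)
    simp only [F]
    rw [ENNReal.tsum_mul_left]
    exact ENNReal.mul_ne_top hDt (geo_tsum q (by positivity) hq)
  intro N
  unfold XX
  rw [lintegral_finsetSum]
  · refine le_trans (Finset.sum_le_sum fun k _ => ?_) (ENNReal.sum_le_tsum (Finset.range N))
    split_ifs with h
    · rw [lintegral_finsetSum _ fun l _ => YY_meas hr0 hr1 ht0 ht G hG N j k l]
      have hb : ∀ l ∈ Finset.Ico k (k + k / M), ∫⁻ ω, YY r t G N j k l ω ∂ℙ ≤ D * (ENNReal.ofReal q)^(k/M) := by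
        intro l hl
        rw [Finset.mem_Ico] at hl
        refine (YY_int hr0 hr1 ht0 ht ν ℙ hiid G hG c hle K hK hK1 C σ hσ hC hdec N j k l (k/M) h.1 hl.1
          (by omega) hl.2).trans ?_
        rw [← hD]
        gcongr
        have e : ENNReal.ofReal q = (ENNReal.ofReal σ)^M * (K:ENNReal)^2 := by
          rw [hqd, ENNReal.ofReal_mul (by positivity), ENNReal.ofReal_pow hσ.le, ENNReal.ofReal_pow (by positivity), mul_comm (ENNReal.ofReal (K:ℝ) ^ 2)]
          simp
        rw [e, mul_pow, ← pow_mul (ENNReal.ofReal σ)]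
        refine mul_le_mul' ?_ le_rfl
        exact pow_le_pow_right_of_le_one' (ENNReal.ofReal_le_one.2 hσ1.le) (Nat.mul_div_le k M)
      refine (Finset.sum_le_sum hb).trans ?_
      simp only [Finset.sum_const, Nat.card_Ico, F, nsmul_eq_mul]
      rw [Nat.add_sub_cancel_left]
      apply le_of_eq; ring
    · simp
  · intro k _
    split_ifs
    · exact Finset.measurable_fun_sum _ fun l _ => YY_meas hr0 hr1 ht0 ht G hG N j k l
    · exact measurable_const

lemma XX_ae (ν : Measure Torus) [IsProbabilityMeasure ν] (ℙ : Measure (ℕ → Torus))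
    [IsProbabilityMeasure ℙ] (hiid : IID ν ℙ)
    (G : Set Torus) (hG : MeasurableSet G) (c : NNReal)
    (hle : ν.restrict G ≤ (c : ENNReal) • hh) (K : NNReal) (hK : ∀ y, sp r t y ≤ K) (hK1 : 1 ≤ K)
    (C σ : ℝ) (hσ : 0 < σ) (hσ1 : σ < 1) (hC : 0 ≤ C) (hdec : ∀ ζ n, ∫ y, Uop r t (fs r t ν ζ n) y ∂hh ≤ C * σ ^ n)
    (M : ℕ) (hM : 0 < M) (hq : (K:ℝ)^2 * σ^M < 1) :
    ∀ᵐ ω ∂ℙ, ∀ j, ∃ B : NNReal, ∃ᶠ N in Filter.atTop, XX r t G M j N ω ≤ B := by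
  rw [ae_all_iff]
  intro j
  obtain ⟨B, hB, hb⟩ := XX_int hr0 hr1 ht0 ht ν ℙ hiid G hG c hle K hK hK1 C σ hσ hσ1 hC hdec M hM hq j
  have hm := XX_meas hr0 hr1 ht0 ht G hG M j
  have h1 : ∫⁻ ω, Filter.liminf (fun N => XX r t G M j N ω) Filter.atTop ∂ℙ ≤ B := by
    refine (lintegral_liminf_le hm).trans ?_
    exact (Filter.liminf_le_liminf (Filter.Eventually.of_forall hb)).trans_eq (Filter.liminf_const B)
  have h2 := ae_lt_top (Measurable.liminf hm) (ne_top_of_le_ne_top hB h1)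
  filter_upwards [h2] with ω hω
  obtain ⟨B', hB'1, hB'2⟩ := ENNReal.lt_iff_exists_nnreal_btwn.1 hω
  exact ⟨B', (Filter.frequently_lt_of_liminf_lt (by isBoundedDefault) hB'1).mono fun N h => h.le⟩

omit hr0 hr1 ht0 ht in
lemma BC (ν : Measure Torus) [IsProbabilityMeasure ν] (ℙ : Measure (ℕ → Torus))
    [IsProbabilityMeasure ℙ] (hiid : IID ν ℙ)
    (G : Set Torus) (hG : MeasurableSet G) (hνG : 0 < ν G) (M : ℕ) (hM : 0 < M) :
    ∀ᵐ ω ∂ℙ, ∀ᶠ k in Filter.atTop, ∃ l ∈ Finset.Ico k (k + k / M), ω l ∈ G := by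
  have h : ∑' k, ℙ {ω | ∀ l ∈ Finset.Ico k (k + k / M), ω l ∈ Gᶜ} ≠ ⊤ := by
    have e : ∀ k, ℙ {ω | ∀ l ∈ Finset.Ico k (k + k / M), ω l ∈ Gᶜ} = (ν Gᶜ)^(k / M) := by
      intro k
      rw [hiid (Finset.Ico k (k + k / M)) (fun _ => Gᶜ) (fun _ => hG.compl)]
      simp
    simp_rw [e]
    rw [div_tsum M hM (fun g => (ν Gᶜ)^g), ENNReal.tsum_geometric]
    have hlt : ν Gᶜ < 1 := by
      rw [prob_compl_eq_one_sub hG]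
      exact ENNReal.sub_lt_self (by simp) (by simp) hνG.ne'
    refine ENNReal.mul_ne_top (by simp) (ENNReal.inv_ne_top.2 ?_)
    exact (tsub_pos_of_lt hlt).ne'
  filter_upwards [ae_eventually_notMem h] with ω hω
  filter_upwards [hω] with k hk
  simpa [and_assoc] using hk

lemma final_part (ν : Measure Torus) [IsProbabilityMeasure ν] 
    (hac : (volume : Measure Torus).withDensity (ν.rnDeriv volume) ≠ 0)
    (ℙ : Measure (ℕ → Torus)) [IsProbabilityMeasure ℙ] (hiid : IID ν ℙ)
    (C : (ℕ → Torus) → (Hn →L[ℂ] Hn))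
    (hC : ∀ (ω : ℕ → Torus) (k j : ℕ),
      inner (𝕜 := ℂ) (en k) (C ω (en j)) =
        CentA r t (fun m => ∑ i ∈ Finset.range (m+1), ω i) k j) :
    ∀ᵐ ω ∂ℙ,
      (Submodule.span ℂ {ψ : Hn | ψ ≠ 0 ∧ ∃ μ : ℂ, C ω ψ = μ • ψ}).topologicalClosure = ⊤ := by
  obtain ⟨G, c, hG, hνG, hle⟩ := good_set ν hac
  obtain ⟨σ, C0, hσ, hσ1, hC0, hdec⟩ := decay hr0 hr1 ht0 ht ν G c hνG hle
  set K : NNReal := max 1 (t / (1 - r)).toNNReal with hKd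
  have hK : ∀ y, sp r t y ≤ K := by
    intro y
    refine (sp_le hr0 hr1 ht0 ht y).trans ((Real.le_coe_toNNReal _).trans ?_)
    exact_mod_cast le_max_right _ _
  have hK1 : 1 ≤ K := le_max_left _ _
  obtain ⟨M0, hM0⟩ := exists_pow_lt_of_lt_one (show (0:ℝ) < ((K:ℝ)^2)⁻¹ by positivity) hσ1
  have hM : 0 < M0 + 1 := Nat.succ_pos _
  have hq : (K:ℝ)^2 * σ^(M0+1) < 1 := by
    have h1 : σ^(M0+1) ≤ σ^M0 := pow_le_pow_of_le_one hσ.le hσ1.le (Nat.le_succ _)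
    have h2 : (0:ℝ) < (K:ℝ)^2 := by positivity
    calc (K:ℝ)^2 * σ^(M0+1) < (K:ℝ)^2 * ((K:ℝ)^2)⁻¹ := by
          apply mul_lt_mul_of_pos_left (h1.trans_lt hM0) h2
      _ = 1 := mul_inv_cancel₀ h2.ne'
  set M := M0 + 1 with hMd
  filter_upwards [XX_ae hr0 hr1 ht0 ht ν ℙ hiid G hG c hle K hK hK1 C0 σ hσ hσ1 hC0 hdec M hM hq,
    BC ν ℙ hiid G hG hνG M hM] with ω h1 h2
  obtain ⟨k1, hk1⟩ := Filter.eventually_atTop.1 h2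
  obtain ⟨j, _, hj⟩ := hk1 k1 le_rfl
  obtain ⟨B, hB⟩ := h1 j
  set k0 := max k1 (j+1) with hk0
  set η : ℕ → Torus := fun m => ∑ i ∈ Finset.range (m+1), ω i with hη
  obtain ⟨μ, hμ, ho, hs⟩ := det_part hr0 hr1 ht0 ht η k0
    (fun N => (Finset.range N).filter fun k => k0 ≤ k ∧ k + k / M ≤ N) 
    (by
      intro k hk
      filter_upwards [Filter.eventually_ge_atTop (k + k / M + 1)] with N hN
      simp only [Finset.mem_filter, Finset.mem_range]
      generalize k / M = u at *
      omega) B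
    (by
      refine hB.mono fun N hN => le_trans ?_ hN
      rw [Finset.sum_filter, XX]
      apply Finset.sum_le_sum
      intro k _
      split_ifs with h3 h4 h4
      · obtain ⟨l, hl, hlG⟩ := hk1 k ((le_max_left _ _).trans h3.1)
        rw [← YY_eq hr0 hr1 ht0 ht G N j k l h4.1 (Finset.mem_Ico.1 hl).1 ((Finset.mem_Ico.1 hl).2.trans_le h3.2) ω hj hlG]
        exact Finset.single_le_sum (f := fun l => YY r t G N j k l ω) (fun _ _ => bot_le) hl
      · exact absurd ⟨(le_max_right k1 (j+1)).trans h3.1, h3.2⟩ h4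
      · exact bot_le
      · exact le_rfl)
  exact criterion hr0 hr1 ht0 ht η (C ω) (hC ω) μ ho hs

end

end

/-- Localization for random OPUC with correlated Verblunski coefficients:
if `θ_k` are i.i.d. with law `ν` (having nontrivial a.c. component and support with nonempty
interior) and `η_k = θ_0 + ⋯ + θ_k`, then almost surely the CMV matrix with Verblunski
coefficients `α_k = r e^{iη_k}` has pure point spectrum. -/
theorem opuc_localization
    (r : ℝ) (hr0 : 0 < r) (hr1 : r < 1) (t : ℝ) (ht : t = Real.sqrt (1 - r^2))
    (ν : Measure Torus) [IsProbabilityMeasure ν]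
    (hac : (volume : Measure Torus).withDensity (ν.rnDeriv volume) ≠ 0)
    (hsupp : (interior (measSupport ν)).Nonempty)
    (ℙ : Measure (ℕ → Torus)) [IsProbabilityMeasure ℙ]
    (hiid : ∀ (s : Finset ℕ) (A : ℕ → Set Torus), (∀ k, MeasurableSet (A k)) →
      ℙ {ω | ∀ k ∈ s, ω k ∈ A k} = ∏ k ∈ s, ν (A k))
    (C : (ℕ → Torus) → (Hn →L[ℂ] Hn))
    (hC : ∀ (ω : ℕ → Torus) (k j : ℕ),
      inner (𝕜 := ℂ) (en k) (C ω (en j)) =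
        CentA r t (fun m => ∑ i ∈ Finset.range (m+1), ω i) k j) :
    ∀ᵐ ω ∂ℙ,
      (Submodule.span ℂ {ψ : Hn | ψ ≠ 0 ∧ ∃ μ : ℂ, C ω ψ = μ • ψ}).topologicalClosure = ⊤ := by
  have h0 : 0 < 1 - r^2 := by nlinarith
  have ht0 : 0 < t := by rw [ht]; exact Real.sqrt_pos.2 h0
  have ht2 : t^2 = 1 - r^2 := by rw [ht]; exact Real.sq_sqrt h0.le
  exact final_part hr0 hr1 ht0 ht2 ν hac ℙ hiid C hC

end
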